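/- arXiv:2404.15453 — 7 statements merged into one kernel-verified Lean document; each statement's English description precedes it below -/
import Mathlib

section
/- Let V be a real inner product space, L : V → V a linear map admitting an adjoint L*, and τ ∈ ℝ. Define R₂ = I + τL + (τ²/2)L² and the bilinear form B_L(w,v) = −⟨(L + L*)w, v⟩. Then for every w ∈ V, ‖R₂ w‖² = ‖w‖² + (τ⁴/4)‖L² w‖² − τ·B_L(w,w) − τ²·B_L(w, L w) − (τ³/2)·B_L(L w, L w). -/
open RealInnerProductSpace

/-!
Since `B_L(w, v) = -(⟪L w, v⟫ + ⟪w, L v⟫)`, pairing `L` against its adjoint trades every cross term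
of `‖w + τ L w + (τ²/2) L² w‖²` for a value of `B_L`. The coefficients of `τ` and `τ³` are
`2⟪w, L w⟫ = -B_L(w, w)` and `⟪L w, L² w⟫ = -B_L(L w, L w) / 2`. In the coefficient of `τ²`, the
weight `1/2` of the second-order term is exactly what makes `‖L w‖²` and `⟪w, L² w⟫` occur equally
often, so that they add up to `-B_L(w, L w)`.
-/

section EnergyIdentity

variable {V : Type*} [SeminormedAddCommGroup V] [InnerProductSpace ℝ V]

theorem norm_add_smul_add_smul_sq (x y z : V) (a b : ℝ) :
    ‖x + a • y + b • z‖ ^ 2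
      = ‖x‖ ^ 2 + a ^ 2 * ‖y‖ ^ 2 + b ^ 2 * ‖z‖ ^ 2
        + 2 * a * ⟪x, y⟫ + 2 * b * ⟪x, z⟫ + 2 * a * b * ⟪y, z⟫ := by
  simp only [norm_add_sq_real, inner_add_left, real_inner_smul_left, real_inner_smul_right,
    norm_smul, mul_pow, Real.norm_eq_abs, sq_abs]
  ring

/-- The form `B_L(w, v) = -⟪(L + L*) w, v⟫`, which measures the energy dissipated by `L`. The
adjoint is passed as a separate map because it need not exist for a general `L`. -/
def dissipationForm (L Lstar : V → V) (w v : V) : ℝ :=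
  -⟪L w + Lstar w, v⟫

variable {L Lstar : V → V}

theorem dissipationForm_eq_neg_inner_add_inner (hadj : ∀ w v : V, ⟪L w, v⟫ = ⟪w, Lstar v⟫)
    (w v : V) : dissipationForm L Lstar w v = -(⟪L w, v⟫ + ⟪w, L v⟫) := by
  have adjoint_left : ⟪Lstar w, v⟫ = ⟪w, L v⟫ := by
    rw [real_inner_comm, ← hadj, real_inner_comm]
  rw [dissipationForm, inner_add_left, adjoint_left]

theorem dissipationForm_self (hadj : ∀ w v : V, ⟪L w, v⟫ = ⟪w, Lstar v⟫) (w : V) :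
    dissipationForm L Lstar w w = -(2 * ⟪w, L w⟫) := by
  rw [dissipationForm_eq_neg_inner_add_inner hadj, real_inner_comm, two_mul]

theorem dissipationForm_apply_right (hadj : ∀ w v : V, ⟪L w, v⟫ = ⟪w, Lstar v⟫) (w : V) :
    dissipationForm L Lstar w (L w) = -(‖L w‖ ^ 2 + ⟪w, L (L w)⟫) := by
  rw [dissipationForm_eq_neg_inner_add_inner hadj, real_inner_self_eq_norm_sq]

theorem rk2_energy_identity_general (hadj : ∀ w v : V, ⟪L w, v⟫ = ⟪w, Lstar v⟫) (τ : ℝ) (w : V) :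
    ‖w + τ • L w + (τ ^ 2 / 2) • L (L w)‖ ^ 2
      = ‖w‖ ^ 2 + (τ ^ 4 / 4) * ‖L (L w)‖ ^ 2
        - τ * dissipationForm L Lstar w w
        - τ ^ 2 * dissipationForm L Lstar w (L w)
        - (τ ^ 3 / 2) * dissipationForm L Lstar (L w) (L w) := by
  calc ‖w + τ • L w + (τ ^ 2 / 2) • L (L w)‖ ^ 2
      = ‖w‖ ^ 2 + (τ ^ 4 / 4) * ‖L (L w)‖ ^ 2
        + τ * (2 * ⟪w, L w⟫)
        + τ ^ 2 * (‖L w‖ ^ 2 + ⟪w, L (L w)⟫)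
        + (τ ^ 3 / 2) * (2 * ⟪L w, L (L w)⟫) := by
        rw [norm_add_smul_add_smul_sq]
        ring
    _ = _ := by
        rw [dissipationForm_self hadj, dissipationForm_apply_right hadj, dissipationForm_self hadj]
        ring

end EnergyIdentity

/-- Energy identity of the two-stage second-order Runge--Kutta scheme
(Proposition 3.2): for `R₂ = I + τL + (τ²/2)L²` and
`B_L(w,v) = -⟪(L + L*)w, v⟫`, one has
`‖R₂ w‖² = ‖w‖² + (τ⁴/4)‖L² w‖² - τ B_L(w,w) - τ² B_L(w, Lw) - (τ³/2) B_L(Lw, Lw)`. -/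
theorem rk2_energy_identity {V : Type*} [NormedAddCommGroup V] [InnerProductSpace ℝ V]
    (L Lstar : V →ₗ[ℝ] V)
    (hadj : ∀ w v : V, ⟪L w, v⟫ = ⟪w, Lstar v⟫)
    (τ : ℝ) (w : V) :
    ‖w + τ • L w + (τ ^ 2 / 2) • L (L w)‖ ^ 2
      = ‖w‖ ^ 2 + (τ ^ 4 / 4) * ‖L (L w)‖ ^ 2
        - τ * (-⟪(L + Lstar) w, w⟫)
        - τ ^ 2 * (-⟪(L + Lstar) w, L w⟫)
        - (τ ^ 3 / 2) * (-⟪(L + Lstar) (L w), L w⟫) :=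
  rk2_energy_identity_general hadj τ w
end

section
/- Let V be a real inner product space, L : V → V a linear map admitting an adjoint L*, τ ∈ ℝ, s ≥ 1, and α₀,…,α_s ∈ ℝ. Define R = Σ_{i=0}^s α_i (τL)^i and B_L(w,v) = −⟨(L + L*)w, v⟩. Then for every w ∈ V, ‖R w‖² = Σ_{i=0}^s β_i τ^{2i} ‖L^i w‖² + Σ_{i,j=0}^{s−1} γ_{ij} τ^{i+j+1} B_L(L^i w, L^j w), where β_i = Σ_{ℓ=max(0,2i−s)}^{min(2i,s)} (−1)^{i−ℓ} α_ℓ α_{2i−ℓ} and γ_{ij} = Σ_{ℓ=max(0,i+j+1−s)}^{min(i,j)} (−1)^{min(i,j)+1−ℓ} α_ℓ α_{i+j+1−ℓ}. -/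
open RealInnerProductSpace

/-!
Writing `P = ∑ αᵢ Xⁱ`, the identity comes from dividing `P(x) P(y)` by `x + y`:
`P(x) P(y) = ∑ βᵢ (xy)ⁱ - (x + y) ∑ γᵢⱼ xⁱ yʲ`. Comparing coefficients of `x^p y^q`, this says
`α_p α_q = δ_{pq} β_p - γ_{p-1,q} - γ_{p,q-1}`, which holds because consecutive alternating partial
sums along an antidiagonal differ by one term, and because such a full alternating sum of even
index is symmetric about its middle. Substituting `τL` acting on the first and on the second
argument of a bilinear map for `x` and `y` turns `-(x + y)` into the jump pairing scaled
by `τ`.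
-/

lemma neg_one_zpow_natCast_sub {K : Type*} [DivisionRing K] (m n : ℕ) :
    (-1 : K) ^ ((m : ℤ) - (n : ℤ)) = (-1) ^ (m + n) := by
  rw [zpow_sub₀ (neg_ne_zero.2 one_ne_zero), zpow_natCast, zpow_natCast, pow_add, div_eq_mul_inv,
    ← inv_pow, inv_neg_one]

section Coefficients

variable {R : Type*} [CommRing R]

/-- The coefficient `β_i` of `‖(τL)^i w‖²`. The sign `(-1)^(i-ℓ)` is written `(-1)^(i+ℓ)`, which
makes sense in every ring. -/
def rkBeta (s : ℕ) (α : ℕ → R) (i : ℕ) : R :=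
  ∑ ℓ ∈ Finset.Icc (2 * i - s) (min (2 * i) s), (-1) ^ (i + ℓ) * (α ℓ * α (2 * i - ℓ))

/-- The coefficient `γ_{ij}` of `τ^{i+j+1} B_L(L^i w, L^j w)`. -/
def rkGamma (s : ℕ) (α : ℕ → R) (i j : ℕ) : R :=
  ∑ ℓ ∈ Finset.Icc (i + j + 1 - s) (min i j),
    (-1) ^ (min i j + 1 - ℓ) * (α ℓ * α (i + j + 1 - ℓ))

/-- The alternating partial sum `-α_{m-1} α_{n-m+1} + α_{m-2} α_{n-m+2} - ⋯` along the `n`-th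
antidiagonal, restricted to the terms with `n - ℓ ≤ s`. With `m = min p (q + 1)` and
`n = p + q` it is `γ_{p-1,q}`, extended by `0` to `p = 0`. -/
def rkAltSum (s : ℕ) (α : ℕ → R) (n m : ℕ) : R :=
  ∑ ℓ ∈ Finset.Ico (n - s) m, (-1) ^ (m + ℓ) * (α ℓ * α (n - ℓ))

variable (s : ℕ) (α : ℕ → R)

lemma rkAltSum_eq_zero {n m : ℕ} (h : m ≤ n - s) : rkAltSum s α n m = 0 := by
  rw [rkAltSum, Finset.Ico_eq_empty_of_le h, Finset.sum_empty]

lemma rkAltSum_succ {n m : ℕ} (h : n - s ≤ m) :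
    rkAltSum s α n (m + 1) = -rkAltSum s α n m - α m * α (n - m) := by
  have last_sign : (-1 : R) ^ (m + m) = 1 := Even.neg_one_pow ⟨m, rfl⟩
  simp only [rkAltSum, Finset.sum_Ico_succ_top h, add_right_comm m 1, pow_succ, mul_neg_one,
    neg_mul, Finset.sum_neg_distrib, last_sign, one_mul, sub_eq_add_neg]

lemma rkGamma_eq_rkAltSum (i j : ℕ) :
    rkGamma s α i j = rkAltSum s α (i + 1 + j) (min (i + 1) (j + 1)) := by
  rw [rkGamma, rkAltSum, Nat.add_min_add_right, Finset.Ico_add_one_right_eq_Icc,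
    add_right_comm i 1 j]
  refine Finset.sum_congr rfl fun ℓ hℓ ↦ ?_
  have hℓ_le : ℓ ≤ min i j + 1 := (Finset.mem_Icc.1 hℓ).2.trans (Nat.le_succ _)
  rw [neg_one_pow_congr (Nat.even_sub hℓ_le |>.trans Nat.even_add.symm)]

lemma rkGamma_comm (i j : ℕ) : rkGamma s α i j = rkGamma s α j i := by
  rw [rkGamma, rkGamma, min_comm, add_comm i j]

lemma rkBeta_eq_two_mul_rkAltSum_add_sq {p : ℕ} (hp : p ≤ s) :
    rkBeta s α p = 2 * rkAltSum s α (2 * p) p + α p ^ 2 := by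
  let f (ℓ : ℕ) : R := (-1) ^ (p + ℓ) * (α ℓ * α (2 * p - ℓ))
  have upper_eq_lower :
      ∑ ℓ ∈ Finset.Ico (p + 1) (min (2 * p) s + 1), f ℓ = ∑ ℓ ∈ Finset.Ico (2 * p - s) p, f ℓ := by
    rw [show p + 1 = 2 * p + 1 - p by omega,
      show min (2 * p) s + 1 = 2 * p + 1 - (2 * p - s) by omega,
      ← Finset.sum_Ico_reflect f _ (by omega)]
    refine Finset.sum_congr rfl fun ℓ hℓ ↦ ?_
    have hℓ_le : ℓ ≤ 2 * p := by have := Finset.mem_Ico.1 hℓ; omega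
    have sign_eq : (-1 : R) ^ (p + (2 * p - ℓ)) = (-1) ^ (p + ℓ) :=
      neg_one_pow_congr (by grind)
    simp only [f, sign_eq, Nat.sub_sub_self hℓ_le, mul_comm (α (2 * p - ℓ))]
  have middle : f p = α p ^ 2 := by
    simp only [f, Even.neg_one_pow ⟨p, rfl⟩, two_mul, Nat.add_sub_cancel, one_mul, sq]
  calc rkBeta s α p = ∑ ℓ ∈ Finset.Ico (2 * p - s) (min (2 * p) s + 1), f ℓ := by
        rw [Finset.Ico_add_one_right_eq_Icc, rkBeta]
    _ = rkAltSum s α (2 * p) p + (f p + ∑ ℓ ∈ Finset.Ico (p + 1) (min (2 * p) s + 1), f ℓ) := by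
        rw [← Finset.sum_Ico_consecutive f (show 2 * p - s ≤ p by omega) (by omega),
          Finset.sum_eq_sum_Ico_succ_bot (show p < min (2 * p) s + 1 by omega) f, rkAltSum]
    _ = 2 * rkAltSum s α (2 * p) p + α p ^ 2 := by
        rw [upper_eq_lower, middle, ← rkAltSum]
        ring

lemma mul_eq_neg_rkAltSum_sub_rkAltSum {p q : ℕ} (hpq : p < q) (hq : q ≤ s) :
    α p * α q = -rkAltSum s α (p + q) (min p (q + 1)) - rkAltSum s α (q + p) (min q (p + 1)) := by
  rw [min_eq_left (by omega : p ≤ q + 1), min_eq_right (by omega : p + 1 ≤ q), add_comm q p,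
    rkAltSum_succ s α (by omega : p + q - s ≤ p), Nat.add_sub_cancel_left]
  ring

lemma mul_eq_rkBeta_sub_rkAltSum {p q : ℕ} (hp : p ≤ s) (hq : q ≤ s) :
    α p * α q = (if p = q then rkBeta s α p else 0)
      - rkAltSum s α (p + q) (min p (q + 1)) - rkAltSum s α (q + p) (min q (p + 1)) := by
  rcases lt_trichotomy p q with hpq | rfl | hqp
  · rw [mul_eq_neg_rkAltSum_sub_rkAltSum s α hpq hq, if_neg hpq.ne, zero_sub]
  · rw [if_pos rfl, rkBeta_eq_two_mul_rkAltSum_add_sq s α hp, min_eq_left p.le_succ, two_mul p]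
    ring
  · rw [mul_comm, mul_eq_neg_rkAltSum_sub_rkAltSum s α hqp hp, if_neg hqp.ne']
    ring

variable {M : Type*} [AddCommGroup M] [Module R M]

lemma sum_rkAltSum_smul (G : ℕ → ℕ → M) :
    ∑ p ∈ Finset.range (s + 1), ∑ q ∈ Finset.range (s + 1),
        rkAltSum s α (p + q) (min p (q + 1)) • G p q
      = ∑ i ∈ Finset.range s, ∑ j ∈ Finset.range s, rkGamma s α i j • G (i + 1) j := by
  have first_row (q : ℕ) : rkAltSum s α (0 + q) (min 0 (q + 1)) = 0 :=
    rkAltSum_eq_zero s α (by omega)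
  have last_column (p : ℕ) : rkAltSum s α (p + s) (min p (s + 1)) = 0 :=
    rkAltSum_eq_zero s α (by omega)
  rw [Finset.sum_range_succ']
  simp only [Finset.sum_range_succ _ s, first_row, last_column, zero_smul, Finset.sum_const_zero,
    add_zero, rkGamma_eq_rkAltSum]

lemma sum_mul_smul_eq_sum_rkBeta_sub_sum_rkGamma (G : ℕ → ℕ → M) :
    ∑ p ∈ Finset.range (s + 1), ∑ q ∈ Finset.range (s + 1), (α p * α q) • G p q
      = ∑ i ∈ Finset.range (s + 1), rkBeta s α i • G i i
        - ∑ i ∈ Finset.range s, ∑ j ∈ Finset.range s,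
            rkGamma s α i j • (G (i + 1) j + G i (j + 1)) := by
  have swapped :
      ∑ p ∈ Finset.range (s + 1), ∑ q ∈ Finset.range (s + 1),
          rkAltSum s α (q + p) (min q (p + 1)) • G p q
        = ∑ i ∈ Finset.range s, ∑ j ∈ Finset.range s, rkGamma s α i j • G i (j + 1) := by
    rw [Finset.sum_comm, sum_rkAltSum_smul s α fun p q ↦ G q p, Finset.sum_comm]
    simp only [rkGamma_comm s α]
  have diagonal :
      ∑ p ∈ Finset.range (s + 1), ∑ q ∈ Finset.range (s + 1),
          (if p = q then rkBeta s α p else 0) • G p q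
        = ∑ i ∈ Finset.range (s + 1), rkBeta s α i • G i i := by
    refine Finset.sum_congr rfl fun p hp ↦ ?_
    simp only [ite_smul, zero_smul, Finset.sum_ite_eq, if_pos hp]
  have split : ∀ p ∈ Finset.range (s + 1), ∀ q ∈ Finset.range (s + 1), (α p * α q) • G p q
      = (if p = q then rkBeta s α p else 0) • G p q
        - rkAltSum s α (p + q) (min p (q + 1)) • G p q
        - rkAltSum s α (q + p) (min q (p + 1)) • G p q := fun p hp q hq ↦ by
    rw [mul_eq_rkBeta_sub_rkAltSum s α (Finset.mem_range_succ_iff.1 hp)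
      (Finset.mem_range_succ_iff.1 hq), sub_smul, sub_smul]
  rw [Finset.sum_congr rfl fun p hp ↦ Finset.sum_congr rfl (split p hp)]
  simp only [Finset.sum_sub_distrib, smul_add, Finset.sum_add_distrib]
  rw [diagonal, sum_rkAltSum_smul, swapped, sub_sub]

end Coefficients

theorem rk_energy_identity_general {R V M : Type*} [CommRing R] [AddCommGroup V] [Module R V]
    [AddCommGroup M] [Module R M] (B : V →ₗ[R] V →ₗ[R] M) (L : V →ₗ[R] V)
    (τ : R) (s : ℕ) (α : ℕ → R) (w : V) :
    B ((∑ i ∈ Finset.range (s + 1), α i • ((τ • L) ^ i)) w)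
        ((∑ i ∈ Finset.range (s + 1), α i • ((τ • L) ^ i)) w)
      = ∑ i ∈ Finset.range (s + 1),
          (rkBeta s α i * τ ^ (2 * i)) • B ((L ^ i) w) ((L ^ i) w)
        + ∑ i ∈ Finset.range s, ∑ j ∈ Finset.range s,
            (rkGamma s α i j * τ ^ (i + j + 1))
              • -(B (L ((L ^ i) w)) ((L ^ j) w) + B ((L ^ i) w) (L ((L ^ j) w))) := by
  have expand :
      B ((∑ i ∈ Finset.range (s + 1), α i • ((τ • L) ^ i)) w)
          ((∑ i ∈ Finset.range (s + 1), α i • ((τ • L) ^ i)) w)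
        = ∑ p ∈ Finset.range (s + 1), ∑ q ∈ Finset.range (s + 1),
            (α p * α q) • τ ^ (p + q) • B ((L ^ p) w) ((L ^ q) w) := by
    simp only [LinearMap.sum_apply, LinearMap.smul_apply, smul_pow, map_sum, map_smul,
      Finset.smul_sum, smul_smul]
    rw [Finset.sum_comm]
    refine Finset.sum_congr rfl fun p _ ↦ Finset.sum_congr rfl fun q _ ↦ ?_
    congr 1
    ring
  rw [expand, sum_mul_smul_eq_sum_rkBeta_sub_sum_rkGamma s α
    fun p q ↦ τ ^ (p + q) • B ((L ^ p) w) ((L ^ q) w), sub_eq_add_neg]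
  simp only [← Finset.sum_neg_distrib, mul_smul, smul_neg, smul_add, pow_succ' L,
    Module.End.mul_apply, two_mul, add_right_comm _ 1, add_assoc]

/-- General energy identity of an `s`-stage Runge--Kutta scheme with stability
polynomial coefficients `α i` (Lemma 3.6): for `R = ∑_{i=0}^s α_i (τL)^i` and
`B_L(w,v) = -⟪(L + L*)w, v⟫`,
`‖R w‖² = ∑_{i=0}^s β_i τ^{2i} ‖L^i w‖² + ∑_{i,j=0}^{s-1} γ_{ij} τ^{i+j+1} B_L(L^i w, L^j w)`,
where `β_i = ∑_{ℓ=max(0,2i-s)}^{min(2i,s)} (-1)^{i-ℓ} α_ℓ α_{2i-ℓ}` and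
`γ_{ij} = ∑_{ℓ=max(0,i+j+1-s)}^{min(i,j)} (-1)^{min(i,j)+1-ℓ} α_ℓ α_{i+j+1-ℓ}`. -/
theorem rk_energy_identity {V : Type*} [NormedAddCommGroup V] [InnerProductSpace ℝ V]
    (L Lstar : V →ₗ[ℝ] V)
    (hadj : ∀ w v : V, ⟪L w, v⟫ = ⟪w, Lstar v⟫)
    (τ : ℝ) (s : ℕ) (hs : 1 ≤ s) (α : ℕ → ℝ) (w : V) :
    ‖(∑ i ∈ Finset.range (s + 1), α i • ((τ • L) ^ i)) w‖ ^ 2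
      = (∑ i ∈ Finset.range (s + 1),
          (∑ ℓ ∈ Finset.Icc (2 * i - s) (min (2 * i) s),
              (-1 : ℝ) ^ ((i : ℤ) - (ℓ : ℤ)) * (α ℓ * α (2 * i - ℓ)))
            * τ ^ (2 * i) * ‖(L ^ i) w‖ ^ 2)
        + ∑ i ∈ Finset.range s, ∑ j ∈ Finset.range s,
            (∑ ℓ ∈ Finset.Icc (i + j + 1 - s) (min i j),
                (-1 : ℝ) ^ (min i j + 1 - ℓ) * (α ℓ * α (i + j + 1 - ℓ)))
              * τ ^ (i + j + 1)
              * (-⟪(L + Lstar) ((L ^ i) w), (L ^ j) w⟫) := by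
  have inner_add_adjoint (u v : V) : ⟪(L + Lstar) u, v⟫ = ⟪L u, v⟫ + ⟪u, L v⟫ := by
    rw [LinearMap.add_apply, inner_add_left, real_inner_comm v (Lstar u), ← hadj,
      real_inner_comm (L v) u]
  simpa only [rkBeta, rkGamma, neg_one_zpow_natCast_sub, inner_add_adjoint, smul_eq_mul,
    innerₗ_apply_apply, real_inner_self_eq_norm_sq]
    using rk_energy_identity_general (innerₗ V) L τ s α w
end

section
/- Let V be a real inner product space, L : V → V a linear map admitting an adjoint L*, and define B_L(w,v) = −⟨(L + L*)w, v⟩. Then for every integer i ≥ 1 and all w, v ∈ V, ⟨L^i w, v⟩ = Σ_{j=0}^{i−1} (−1)^{j+1} B_L(L^{i−j−1} w, L^{j} v) + (−1)^i ⟨w, L^i v⟩. -/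
open RealInnerProductSpace

/-!
For a pairing `b` and self-maps `f`, `g` of its two arguments, let
`a j = b (f^[n - j] x) (g^[j] y)`. Each step `j → j + 1` trades one `f` on the left for one `g` on
the right, so `a j + a (j + 1)` is a single boundary term up to sign. The alternating sum
telescopes.
-/

/-- The boundary pairing of self-maps `f` and `g` with respect to a pairing `b`: for bilinear `b` it
measures the failure of `f` and `-g` to be adjoint. With `b` a real inner product and `f = g = L` it
is the paper's `B_L`, expressed by moving the adjoint of `L` to the other argument, so that the
adjoint need not exist. -/
def boundaryPairing {X Y A : Type*} [AddCommGroup A] (b : X → Y → A) (f : X → X) (g : Y → Y)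
    (x : X) (y : Y) : A :=
  -(b (f x) y + b x (g y))

theorem boundaryPairing_inner_of_adjoint {𝕜 E : Type*} [RCLike 𝕜] [SeminormedAddCommGroup E]
    [InnerProductSpace 𝕜 E] {f f' : E → E}
    (hadj : ∀ x y, inner 𝕜 (f x) y = inner 𝕜 x (f' y)) (x y : E) :
    boundaryPairing (inner 𝕜) f f x y = -inner 𝕜 (f x + f' x) y := by
  have hadj_symm : inner 𝕜 (f' x) y = inner 𝕜 x (f y) := by
    rw [← inner_conj_symm, ← hadj, inner_conj_symm]
  rw [boundaryPairing, inner_add_left, hadj_symm]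

theorem sum_range_neg_one_pow_smul_add_succ {A : Type*} [AddCommGroup A] (a : ℕ → A) (n : ℕ) :
    ∑ j ∈ Finset.range n, (-1 : ℤ) ^ j • (a j + a (j + 1)) = a 0 - (-1 : ℤ) ^ n • a n := by
  calc ∑ j ∈ Finset.range n, (-1 : ℤ) ^ j • (a j + a (j + 1))
      = ∑ j ∈ Finset.range n, ((-1 : ℤ) ^ j • a j - (-1 : ℤ) ^ (j + 1) • a (j + 1)) :=
        Finset.sum_congr rfl fun j _ ↦ by module
    _ = a 0 - (-1 : ℤ) ^ n • a n := by
        rw [Finset.sum_range_sub' fun j ↦ (-1 : ℤ) ^ j • a j, pow_zero, one_smul]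

theorem discrete_integration_by_parts_general {X Y A : Type*} [AddCommGroup A]
    (b : X → Y → A) (f : X → X) (g : Y → Y) (n : ℕ) (x : X) (y : Y) :
    b (f^[n] x) y
      = (∑ j ∈ Finset.range n,
          (-1 : ℤ) ^ (j + 1) • boundaryPairing b f g (f^[n - j - 1] x) (g^[j] y))
        + (-1 : ℤ) ^ n • b x (g^[n] y) := by
  let a : ℕ → A := fun j ↦ b (f^[n - j] x) (g^[j] y)
  have boundary_term : ∀ j ∈ Finset.range n,
      (-1 : ℤ) ^ (j + 1) • boundaryPairing b f g (f^[n - j - 1] x) (g^[j] y)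
        = (-1 : ℤ) ^ j • (a j + a (j + 1)) := by
    intro j hj
    have hsub : n - j - 1 + 1 = n - j := by
      have := Finset.mem_range.mp hj
      omega
    have hf : f (f^[n - j - 1] x) = f^[n - j] x := by
      rw [← Function.iterate_succ_apply' f, Nat.succ_eq_add_one, hsub]
    have hg : g (g^[j] y) = g^[j + 1] y := (Function.iterate_succ_apply' g j y).symm
    simp only [boundaryPairing, a, hf, hg, ← Nat.sub_sub, pow_succ, mul_neg_one, neg_smul_neg]
  rw [Finset.sum_congr rfl boundary_term, sum_range_neg_one_pow_smul_add_succ]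
  simp [a]

/-- Discrete integration by parts (Lemma 7.1): with
`B_L(w,v) = -⟪(L + L*)w, v⟫`, for every `i ≥ 1`,
`⟪L^i w, v⟫ = ∑_{j=0}^{i-1} (-1)^{j+1} B_L(L^{i-j-1} w, L^j v) + (-1)^i ⟪w, L^i v⟫`. -/
theorem discrete_integration_by_parts {V : Type*} [NormedAddCommGroup V]
    [InnerProductSpace ℝ V] (L Lstar : V →ₗ[ℝ] V)
    (hadj : ∀ w v : V, ⟪L w, v⟫ = ⟪w, Lstar v⟫)
    (i : ℕ) (hi : 1 ≤ i) (w v : V) :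
    ⟪(L ^ i) w, v⟫
      = (∑ j ∈ Finset.range i,
          (-1 : ℝ) ^ (j + 1) * (-⟪(L + Lstar) ((L ^ (i - j - 1)) w), (L ^ j) v⟫))
        + (-1 : ℝ) ^ i * ⟪w, (L ^ i) v⟫ := by
  simpa [Module.End.pow_apply, boundaryPairing_inner_of_adjoint hadj] using
    discrete_integration_by_parts_general (inner ℝ) L L i w v
end

section
/- For every constant c₄ > 0 there exist ε > 0 and λ₀ > 0 (depending only on c₄) with the following property. Let V be a finite-dimensional real inner product space, L : V → V a semi-negative linear map, h > 0, τ > 0, and λ = τ/h ≤ λ₀. Assume that for all w ∈ V one has τ⁴‖L² w‖² ≤ c₄ (τ λ³ |w|_Γ² + τ³ λ |L w|_Γ²). Then for R₂ = I + τL + (τ²/2)L², every w ∈ V satisfies ‖R₂ w‖² ≤ ‖w‖² − ε (τ |w|_Γ² + τ³ |L w|_Γ²). -/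
open RealInnerProductSpace

/-- The jump seminorm `|v|_Γ = (-⟪(L + L*)v, v⟫)^{1/2}` associated with a
semi-negative operator `L` with adjoint `L*`. -/
noncomputable def jumpSN {V : Type*} [NormedAddCommGroup V] [InnerProductSpace ℝ V]
    (L Lstar : V →ₗ[ℝ] V) (v : V) : ℝ :=
  Real.sqrt (-⟪(L + Lstar) v, v⟫)

/-!
Write `[u, v] = -⟪(L + L*)u, v⟫`. Using `⟪L²w, w⟫ + ‖Lw‖² = -[w, Lw]`, the expansion of the norm
reads `‖R₂ w‖² = ‖w‖² - τ[w, w] - τ²[w, Lw] - (τ³/2)[Lw, Lw] + (τ⁴/4)‖L²w‖²`.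
The three jump terms form a positive definite quadratic form in `√τ w` and `√τ³ Lw`, because the
discriminant `1² - 4 · 1 · (1/2)` is negative. They dominate `(τ/4)[w, w] + (τ³/6)[Lw, Lw]`, and for
small `λ` the remaining term `(τ⁴/4)‖L²w‖²` is a small multiple of `τ[w, w] + τ³[Lw, Lw]`.
-/

theorem neg_two_mul_apply_le_of_isPosSemidef {R M : Type*} [CommRing R] [PartialOrder R]
    [IsOrderedRing R] [AddCommGroup M] [Module R M] {B : LinearMap.BilinForm R M}
    (hB : B.IsPosSemidef) (t : R) (u v : M) :
    -(2 * t * B u v) ≤ B u u + t ^ 2 * B v v := by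
  have hnonneg : 0 ≤ B (u + t • v) (u + t • v) := hB.nonneg _
  have hexpand : B (u + t • v) (u + t • v) = B u u + t ^ 2 * B v v + 2 * t * B u v := by
    simp only [map_add, map_smul, LinearMap.add_apply, LinearMap.smul_apply, smul_eq_mul,
      hB.isSymm.eq v u]
    ring
  rw [hexpand] at hnonneg
  exact neg_le_iff_add_nonneg.2 hnonneg

section JumpForm

variable {V : Type*} [NormedAddCommGroup V] [InnerProductSpace ℝ V] {L Lstar : V →ₗ[ℝ] V}

/-- The jump form `[u, v] = -⟪(L + L*)u, v⟫`, of which the jump seminorm is the associated seminorm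
when `L` is semi-negative. The adjoint is an independent argument, as in `jumpSN`. -/
noncomputable def jumpForm (L Lstar : V →ₗ[ℝ] V) : LinearMap.BilinForm ℝ V :=
  -(innerₗ V ∘ₗ (L + Lstar))

theorem jumpForm_eq_neg_inner_add_inner (hadj : ∀ u v : V, ⟪L u, v⟫ = ⟪u, Lstar v⟫) (u v : V) :
    jumpForm L Lstar u v = -(⟪L u, v⟫ + ⟪u, L v⟫) := calc
  jumpForm L Lstar u v = -⟪(L + Lstar) u, v⟫ := rfl
  _ = -(⟪L u, v⟫ + ⟪u, L v⟫) := by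
    rw [LinearMap.add_apply, inner_add_left, real_inner_comm v (Lstar u), ← hadj v u,
      real_inner_comm u (L v)]

theorem jumpForm_isPosSemidef (hadj : ∀ u v : V, ⟪L u, v⟫ = ⟪u, Lstar v⟫)
    (hneg : ∀ v : V, ⟪(L + Lstar) v, v⟫ ≤ 0) : (jumpForm L Lstar).IsPosSemidef where
  eq u v := by
    rw [jumpForm_eq_neg_inner_add_inner hadj, jumpForm_eq_neg_inner_add_inner hadj,
      real_inner_comm (L v) u, real_inner_comm v (L u), add_comm]
  nonneg v := neg_nonneg.2 (hneg v)

theorem jumpSN_sq {v : V} (hv : ⟪(L + Lstar) v, v⟫ ≤ 0) :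
    jumpSN L Lstar v ^ 2 = jumpForm L Lstar v v :=
  Real.sq_sqrt (neg_nonneg.2 hv)

theorem norm_rk2_sq_eq (hadj : ∀ u v : V, ⟪L u, v⟫ = ⟪u, Lstar v⟫) (τ : ℝ) (w : V) :
    ‖w + τ • L w + (τ ^ 2 / 2) • L (L w)‖ ^ 2
      = ‖w‖ ^ 2 - τ * jumpForm L Lstar w w - τ ^ 2 * jumpForm L Lstar w (L w)
        - τ ^ 3 / 2 * jumpForm L Lstar (L w) (L w) + τ ^ 4 / 4 * ‖L (L w)‖ ^ 2 := by
  simp only [jumpForm_eq_neg_inner_add_inner hadj, ← real_inner_self_eq_norm_sq,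
    inner_add_left, inner_add_right, real_inner_smul_left, real_inner_smul_right,
    real_inner_comm w, real_inner_comm (L w) (L (L w))]
  ring

theorem norm_rk2_sq_le (hadj : ∀ u v : V, ⟪L u, v⟫ = ⟪u, Lstar v⟫)
    (hneg : ∀ v : V, ⟪(L + Lstar) v, v⟫ ≤ 0) {τ : ℝ} (hτ : 0 ≤ τ) (w : V) :
    ‖w + τ • L w + (τ ^ 2 / 2) • L (L w)‖ ^ 2
      ≤ ‖w‖ ^ 2 - τ / 4 * jumpSN L Lstar w ^ 2 - τ ^ 3 / 6 * jumpSN L Lstar (L w) ^ 2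
        + τ ^ 4 / 4 * ‖L (L w)‖ ^ 2 := by
  have hcross : -(τ ^ 2 * jumpForm L Lstar w (L w))
      ≤ 3 * τ / 4 * jumpForm L Lstar w w + τ ^ 3 / 3 * jumpForm L Lstar (L w) (L w) := by
    -- Any weight `sτ` with `1/2 < s < 1` leaves a positive part of both diagonal jump terms.
    have hyoung := neg_two_mul_apply_le_of_isPosSemidef (jumpForm_isPosSemidef hadj hneg)
      (2 * τ / 3) w (L w)
    linear_combination 3 * τ / 4 * hyoung
  rw [norm_rk2_sq_eq hadj, jumpSN_sq (hneg w), jumpSN_sq (hneg (L w))]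
  linear_combination hcross

end JumpForm

theorem rk2dg1_monotonicity_stability_general {V : Type*} [NormedAddCommGroup V]
    [InnerProductSpace ℝ V] {L Lstar : V →ₗ[ℝ] V}
    (hadj : ∀ u v : V, ⟪L u, v⟫ = ⟪u, Lstar v⟫) (hneg : ∀ v : V, ⟪(L + Lstar) v, v⟫ ≤ 0)
    {c₄ τ lam : ℝ} (hc₄ : 0 < c₄) (hτ : 0 ≤ τ) (hlam : 0 ≤ lam)
    (hlam_le : lam ≤ min 1 (1 / (6 * c₄))) {w : V}
    (hbound : τ ^ 4 * ‖L (L w)‖ ^ 2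
      ≤ c₄ * (τ * lam ^ 3 * jumpSN L Lstar w ^ 2 + τ ^ 3 * lam * jumpSN L Lstar (L w) ^ 2)) :
    ‖w + τ • L w + (τ ^ 2 / 2) • L (L w)‖ ^ 2
      ≤ ‖w‖ ^ 2 - 1 / 8 * (τ * jumpSN L Lstar w ^ 2 + τ ^ 3 * jumpSN L Lstar (L w) ^ 2) := by
  obtain ⟨hlam_one, hlam_c₄⟩ := le_min_iff.1 hlam_le
  have hc₄lam : c₄ * lam ≤ 1 / 6 := by
    rw [le_div_iff₀ (by positivity)] at hlam_c₄
    linarith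
  have hcube : lam ^ 3 ≤ lam := pow_le_of_le_one hlam hlam_one three_ne_zero
  have hsmall : τ ^ 4 * ‖L (L w)‖ ^ 2
      ≤ 1 / 6 * (τ * jumpSN L Lstar w ^ 2 + τ ^ 3 * jumpSN L Lstar (L w) ^ 2) := calc
    τ ^ 4 * ‖L (L w)‖ ^ 2
    _ ≤ c₄ * (τ * lam ^ 3 * jumpSN L Lstar w ^ 2 + τ ^ 3 * lam * jumpSN L Lstar (L w) ^ 2) :=
      hbound
    _ ≤ c₄ * (τ * lam * jumpSN L Lstar w ^ 2 + τ ^ 3 * lam * jumpSN L Lstar (L w) ^ 2) := by gcongr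
    _ = c₄ * lam * (τ * jumpSN L Lstar w ^ 2 + τ ^ 3 * jumpSN L Lstar (L w) ^ 2) := by ring
    _ ≤ 1 / 6 * (τ * jumpSN L Lstar w ^ 2 + τ ^ 3 * jumpSN L Lstar (L w) ^ 2) := by gcongr
  have henergy := norm_rk2_sq_le hadj hneg hτ w
  have hjump : 0 ≤ τ * jumpSN L Lstar w ^ 2 := by positivity
  linarith

/-- Monotonicity stability of RK2DG1 (Proposition 3.4): under the bound
`τ⁴‖L²w‖² ≤ c₄(τλ³|w|_Γ² + τ³λ|Lw|_Γ²)` for a semi-negative `L` and `λ = τ/h ≤ λ₀`,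
the operator `R₂ = I + τL + (τ²/2)L²` satisfies
`‖R₂ w‖² ≤ ‖w‖² - ε(τ|w|_Γ² + τ³|Lw|_Γ²)`. -/
theorem rk2dg1_monotonicity_stability :
    ∀ c₄ : ℝ, 0 < c₄ → ∃ ε > (0 : ℝ), ∃ lam₀ > (0 : ℝ),
      ∀ (V : Type) [NormedAddCommGroup V] [InnerProductSpace ℝ V] [FiniteDimensional ℝ V],
      ∀ L Lstar : V →ₗ[ℝ] V,
        (∀ w v : V, ⟪L w, v⟫ = ⟪w, Lstar v⟫) →
        (∀ v : V, ⟪(L + Lstar) v, v⟫ ≤ 0) →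
        ∀ h τ : ℝ, 0 < h → 0 < τ → τ / h ≤ lam₀ →
        (∀ w : V, τ ^ 4 * ‖L (L w)‖ ^ 2
            ≤ c₄ * (τ * (τ / h) ^ 3 * (jumpSN L Lstar w) ^ 2
              + τ ^ 3 * (τ / h) * (jumpSN L Lstar (L w)) ^ 2)) →
        ∀ w : V,
          ‖w + τ • L w + (τ ^ 2 / 2) • L (L w)‖ ^ 2
            ≤ ‖w‖ ^ 2
              - ε * (τ * (jumpSN L Lstar w) ^ 2 + τ ^ 3 * (jumpSN L Lstar (L w)) ^ 2) :=
  fun c₄ hc₄ => ⟨1 / 8, by norm_num, min 1 (1 / (6 * c₄)), by positivity,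
    fun _ _ _ _ _ _ hadj hneg _ _ hh hτ hlam hbound w =>
      rk2dg1_monotonicity_stability_general hadj hneg hc₄ hτ.le (div_pos hτ hh).le hlam (hbound w)⟩
end

section
/- For all constants c₁, c₂, c₃ > 0 and every integer vector \underline{i} = (i₁, …, i_m) with m ≥ 2 and all entries ≥ 1, there exists C > 0 (depending only on c₁, c₂, c₃ and \underline{i}) with the following property. Let V be a real inner product space, L : V → V a semi-negative linear map with adjoint L*, P : V → V an orthogonal projection, and h > 0, such that for all w, v ∈ V: ‖P L w‖ ≤ c₁ h^{−1/2} |w|_Γ, ‖P L* w‖ ≤ c₁ h^{−1/2} |w|_Γ, |v|_Γ ≤ c₂ h^{−1/2} ‖v‖, and ‖L v‖ ≤ c₃ h^{−1} ‖v‖. Writing |\underline{i}| = i₁ + ⋯ + i_m and L^{\underline{i}} = L^{i₁} P L^{i₂} P ⋯ P L^{i_m}, one has for all w, v ∈ V: |⟨L^{\underline{i}} w, v⟩| ≤ C Σ_{j=0}^{i₁−1} h^{−|\underline{i}| + i_m + j} |L^{i_m − 1} w|_Γ |L^{j} v|_Γ. -/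
open RealInnerProductSpace

/-- Alternating composition `L^{i₁} P L^{i₂} P ⋯ P L^{i_m}` associated with an
integer vector `(i₁, …, i_m)`. -/
def altComp {V : Type*} [AddCommGroup V] [Module ℝ V]
    (L P : V →ₗ[ℝ] V) : List ℕ → (V →ₗ[ℝ] V)
  | [] => 1
  | [i] => L ^ i
  | i :: rest => L ^ i * P * altComp L P rest

/-!
Replacing `(L, L*)` by `(hL, hL*)` multiplies the jump seminorm by `√h`, which reduces the estimate
to the case `h = 1`. There, `⟪L x, v⟫ = ⟪x, (L + L*) v⟫ - ⟪x, L v⟫`, and Cauchy–Schwarz for the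
semi-negative form `⟪(L + L*) x, v⟫` bounds the first term by `|x|_Γ |v|_Γ`. Hence the factors `L`
of `L^{i₁}` move one at a time from the left to the right of the inner product, each at the cost of
one term of the sum. The last factor acts on the range of `P` and is absorbed by the bound on
`P L*`. On the side of `w`, the inner operators `L^{i_k}` and `P` are bounded in norm, and the bound
on `P L` absorbs the innermost pair.
-/

lemma exists_eq_cons_append_singleton {α : Type*} {l : List α} (hl : 2 ≤ l.length) :
    ∃ a t b, l = a :: (t ++ [b]) := by
  obtain ⟨a, s, rfl⟩ := List.exists_cons_of_length_pos (by omega : 0 < l.length)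
  obtain ⟨t, b, rfl⟩ := (List.eq_nil_or_concat' s).resolve_left (by rintro rfl; simp at hl)
  exact ⟨a, t, b, rfl⟩

lemma rpow_neg_half {x : ℝ} (hx : 0 ≤ x) : x ^ (-(1 / 2) : ℝ) = (√x)⁻¹ := by
  rw [Real.rpow_neg hx, Real.sqrt_eq_rpow]

lemma pow_mul_rpow_neg_add_add {x : ℝ} (hx : 0 < x) (k m n : ℕ) :
    x ^ k * x ^ (-(k : ℝ) + m + n) = x ^ m * x ^ n := by
  rw [add_assoc, Real.rpow_add hx, Real.rpow_add hx, Real.rpow_neg hx.le]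
  simp only [Real.rpow_natCast]
  exact mul_inv_cancel_left₀ (pow_pos hx k).ne' _

lemma norm_pow_apply_le {R E : Type*} [Semiring R] [SeminormedAddCommGroup E] [Module R E]
    {T : E →ₗ[R] E} {c : ℝ} (hc : 0 ≤ c) (hT : ∀ v, ‖T v‖ ≤ c * ‖v‖) (n : ℕ) (v : E) :
    ‖(T ^ n) v‖ ≤ c ^ n * ‖v‖ := by
  induction n with
  | zero => simp
  | succ n ih =>
    calc ‖(T ^ (n + 1)) v‖ = ‖T ((T ^ n) v)‖ := by rw [pow_succ', Module.End.mul_apply]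
      _ ≤ c * (c ^ n * ‖v‖) := (hT _).trans (by gcongr)
      _ = c ^ (n + 1) * ‖v‖ := by ring

lemma norm_apply_le_of_isSymmetricProjection {𝕜 E : Type*} [RCLike 𝕜] [NormedAddCommGroup E]
    [InnerProductSpace 𝕜 E] {P : E →ₗ[𝕜] E} (hP : P.IsSymmetricProjection) (x : E) :
    ‖P x‖ ≤ ‖x‖ := by
  obtain ⟨_, hP_eq⟩ := LinearMap.isSymmetricProjection_iff_eq_coe_starProjection_range.mp hP
  rw [hP_eq]
  exact Submodule.norm_starProjection_apply_le _ x

section AltComp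

variable {V : Type*} [AddCommGroup V] [Module ℝ V]

lemma altComp_cons (L P : V →ₗ[ℝ] V) (i : ℕ) {l : List ℕ} (hl : l ≠ []) :
    altComp L P (i :: l) = L ^ i * P * altComp L P l := by
  obtain ⟨k, l, rfl⟩ := List.exists_cons_of_ne_nil hl
  rfl

lemma altComp_smul (a : ℝ) (L P : V →ₗ[ℝ] V) (l : List ℕ) :
    altComp (a • L) P l = a ^ l.sum • altComp L P l := by
  induction l with
  | nil => simp [altComp]
  | cons i l ih =>
    rcases eq_or_ne l [] with rfl | hl
    · simp [altComp, smul_pow]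
    · simp only [altComp_cons _ _ _ hl, ih, smul_pow, smul_mul_assoc, mul_smul_comm, smul_smul,
        List.sum_cons, pow_add, mul_comm]

end AltComp

lemma norm_apply_altComp_append_singleton_le {V : Type*} [SeminormedAddCommGroup V] [Module ℝ V]
    {L P : V →ₗ[ℝ] V} {c : ℝ} (hc : 0 ≤ c) (hP : ∀ v, ‖P v‖ ≤ ‖v‖)
    (hL : ∀ v, ‖L v‖ ≤ c * ‖v‖) (l : List ℕ) (i : ℕ) (w : V) :
    ‖P (altComp L P (l ++ [i]) w)‖ ≤ c ^ l.sum * ‖P ((L ^ i) w)‖ := by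
  induction l with
  | nil => simp [altComp]
  | cons k l ih =>
    rw [List.cons_append, altComp_cons L P k (by simp)]
    calc ‖P ((L ^ k) (P (altComp L P (l ++ [i]) w)))‖
        ≤ ‖(L ^ k) (P (altComp L P (l ++ [i]) w))‖ := hP _
      _ ≤ c ^ k * (c ^ l.sum * ‖P ((L ^ i) w)‖) :=
          (norm_pow_apply_le hc hL k _).trans (by gcongr)
      _ = c ^ (k :: l).sum * ‖P ((L ^ i) w)‖ := by rw [List.sum_cons]; ring

section JumpSeminorm

variable {V : Type*} [NormedAddCommGroup V] [InnerProductSpace ℝ V] {L Lstar P : V →ₗ[ℝ] V}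

lemma jumpSN_nonneg (L Lstar : V →ₗ[ℝ] V) (v : V) : 0 ≤ jumpSN L Lstar v :=
  Real.sqrt_nonneg _

lemma jumpSN_smul_smul {a : ℝ} (ha : 0 ≤ a) (L Lstar : V →ₗ[ℝ] V) (v : V) :
    jumpSN (a • L) (a • Lstar) v = √a * jumpSN L Lstar v := by
  rw [jumpSN, jumpSN, ← smul_add, LinearMap.smul_apply, real_inner_smul_left, ← mul_neg,
    Real.sqrt_mul ha]

lemma jumpSN_smul_right {a : ℝ} (ha : 0 ≤ a) (L Lstar : V →ₗ[ℝ] V) (v : V) :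
    jumpSN L Lstar (a • v) = a * jumpSN L Lstar v := by
  rw [jumpSN, jumpSN, map_smul, real_inner_smul_left, real_inner_smul_right, ← mul_assoc,
    ← mul_neg, Real.sqrt_mul (mul_self_nonneg a), Real.sqrt_mul_self ha]

lemma jumpSN_smul_pow_apply {a : ℝ} (ha : 0 ≤ a) (L Lstar : V →ₗ[ℝ] V) (k : ℕ) (v : V) :
    jumpSN (a • L) (a • Lstar) (((a • L) ^ k) v) = √a * a ^ k * jumpSN L Lstar ((L ^ k) v) := by
  rw [jumpSN_smul_smul ha, smul_pow, LinearMap.smul_apply, jumpSN_smul_right (pow_nonneg ha k),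
    mul_assoc]

lemma norm_smul_le_mul_jumpSN_smul_smul {c h : ℝ} (hh : 0 < h) {x y : V}
    (hxy : ‖x‖ ≤ c * h ^ (-(1 / 2) : ℝ) * jumpSN L Lstar y) :
    ‖h • x‖ ≤ c * jumpSN (h • L) (h • Lstar) y := by
  rw [rpow_neg_half hh.le] at hxy
  calc ‖h • x‖ = √h * √h * ‖x‖ := by rw [norm_smul_of_nonneg hh.le, Real.mul_self_sqrt hh.le]
    _ ≤ √h * √h * (c * (√h)⁻¹ * jumpSN L Lstar y) := by gcongr
    _ = c * (√h * jumpSN L Lstar y) := by field_simp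
    _ = c * jumpSN (h • L) (h • Lstar) y := by rw [jumpSN_smul_smul hh.le]

lemma jumpSN_smul_smul_le_mul_norm {c h : ℝ} (hh : 0 < h) {x : V}
    (hx : jumpSN L Lstar x ≤ c * h ^ (-(1 / 2) : ℝ) * ‖x‖) :
    jumpSN (h • L) (h • Lstar) x ≤ c * ‖x‖ := by
  rw [rpow_neg_half hh.le] at hx
  calc jumpSN (h • L) (h • Lstar) x = √h * jumpSN L Lstar x := jumpSN_smul_smul hh.le L Lstar x
    _ ≤ √h * (c * (√h)⁻¹ * ‖x‖) := by gcongr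
    _ = c * ‖x‖ := by field_simp

lemma inner_smul_apply_eq_inner_smul_adjoint (a : ℝ) (hadj : ∀ w v, ⟪L w, v⟫ = ⟪w, Lstar v⟫)
    (w v : V) : ⟪(a • L) w, v⟫ = ⟪w, (a • Lstar) v⟫ := by
  simp only [LinearMap.smul_apply, real_inner_smul_left, real_inner_smul_right, hadj]

lemma inner_smul_add_smul_nonpos {a : ℝ} (ha : 0 ≤ a) (hneg : ∀ v, ⟪(L + Lstar) v, v⟫ ≤ 0)
    (v : V) : ⟪(a • L + a • Lstar) v, v⟫ ≤ 0 := by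
  rw [← smul_add, LinearMap.smul_apply, real_inner_smul_left]
  exact mul_nonpos_of_nonneg_of_nonpos ha (hneg v)

lemma isSymmetric_add_adjoint (hadj : ∀ w v, ⟪L w, v⟫ = ⟪w, Lstar v⟫) :
    (L + Lstar).IsSymmetric := fun x y => by
  have hadj' : ⟪Lstar x, y⟫ = ⟪x, L y⟫ := by rw [real_inner_comm, ← hadj, real_inner_comm]
  rw [LinearMap.add_apply, LinearMap.add_apply, inner_add_left, inner_add_right, hadj, hadj',
    add_comm]

lemma abs_inner_add_adjoint_le (hadj : ∀ w v, ⟪L w, v⟫ = ⟪w, Lstar v⟫)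
    (hneg : ∀ v, ⟪(L + Lstar) v, v⟫ ≤ 0) (x y : V) :
    |⟪x, (L + Lstar) y⟫| ≤ jumpSN L Lstar x * jumpSN L Lstar y := by
  let B : V →ₗ[ℝ] V →ₗ[ℝ] ℝ := -(innerₗ V ∘ₗ (L + Lstar))
  have hB (x y : V) : B x y = -⟪(L + Lstar) x, y⟫ := rfl
  have hB_nonneg (x : V) : 0 ≤ B x x := by simpa only [hB, neg_nonneg] using hneg x
  have hB_symm : B.IsSymm := ⟨fun x y => by
    simp only [hB, RingHom.id_apply]
    rw [isSymmetric_add_adjoint hadj, real_inner_comm]⟩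
  have hCS : B x y ^ 2 ≤ B x x * B y y :=
    LinearMap.BilinForm.apply_sq_le_of_symm B hB_nonneg hB_symm x y
  rw [← isSymmetric_add_adjoint hadj, ← abs_neg]
  exact (Real.abs_le_sqrt hCS).trans_eq (Real.sqrt_mul (hB_nonneg x) _)

lemma abs_inner_apply_le (hadj : ∀ w v, ⟪L w, v⟫ = ⟪w, Lstar v⟫)
    (hneg : ∀ v, ⟪(L + Lstar) v, v⟫ ≤ 0) (x v : V) :
    |⟪L x, v⟫| ≤ jumpSN L Lstar x * jumpSN L Lstar v + |⟪x, L v⟫| :=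
  calc |⟪L x, v⟫| = |⟪x, (L + Lstar) v⟫ - ⟪x, L v⟫| := by
        rw [hadj, LinearMap.add_apply, inner_add_right, add_sub_cancel_left]
    _ ≤ |⟪x, (L + Lstar) v⟫| + |⟪x, L v⟫| := abs_sub _ _
    _ ≤ jumpSN L Lstar x * jumpSN L Lstar v + |⟪x, L v⟫| := by
        gcongr
        exact abs_inner_add_adjoint_le hadj hneg x v

lemma abs_inner_pow_apply_le (hadj : ∀ w v, ⟪L w, v⟫ = ⟪w, Lstar v⟫)
    (hneg : ∀ v, ⟪(L + Lstar) v, v⟫ ≤ 0) (n : ℕ) (x v : V) :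
    |⟪(L ^ n) x, v⟫| ≤
      ∑ j ∈ Finset.range n, jumpSN L Lstar ((L ^ (n - (j + 1))) x) * jumpSN L Lstar ((L ^ j) v) +
        |⟪x, (L ^ n) v⟫| := by
  induction n generalizing v with
  | zero => simp
  | succ n ih =>
    have hstep := abs_inner_apply_le hadj hneg ((L ^ n) x) v
    have hrest := ih (L v)
    simp only [← Module.End.mul_apply, ← pow_succ, ← pow_succ'] at hstep hrest
    simp only [Finset.sum_range_succ', Nat.add_sub_add_right, Nat.sub_zero, pow_zero,
      Module.End.one_apply]
    linarith

lemma jumpSN_pow_apply_le_mul_norm {c₂ c₃ : ℝ} (hc₂ : 0 ≤ c₂) (hc₃ : 0 ≤ c₃)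
    (hjump : ∀ v, jumpSN L Lstar v ≤ c₂ * ‖v‖) (hL : ∀ v, ‖L v‖ ≤ c₃ * ‖v‖)
    {k n : ℕ} (hkn : k ≤ n) (v : V) :
    jumpSN L Lstar ((L ^ k) v) ≤ c₂ * (1 + c₃) ^ n * ‖v‖ :=
  calc jumpSN L Lstar ((L ^ k) v) ≤ c₂ * ‖(L ^ k) v‖ := hjump _
    _ ≤ c₂ * ((1 + c₃) ^ k * ‖v‖) := by
        gcongr
        refine norm_pow_apply_le (by positivity) (fun x => (hL x).trans ?_) k v
        gcongr
        exact le_add_of_nonneg_left zero_le_one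
    _ ≤ c₂ * ((1 + c₃) ^ n * ‖v‖) := by
        gcongr
        exact le_add_of_nonneg_right hc₃
    _ = c₂ * (1 + c₃) ^ n * ‖v‖ := by ring

lemma abs_inner_apply_le_of_apply_eq_self {c₁ : ℝ} (hadj : ∀ w v, ⟪L w, v⟫ = ⟪w, Lstar v⟫)
    (hP : P.IsSymmetric) (hPLstar : ∀ w, ‖P (Lstar w)‖ ≤ c₁ * jumpSN L Lstar w)
    {u : V} (hu : P u = u) (v : V) :
    |⟪L u, v⟫| ≤ c₁ * ‖u‖ * jumpSN L Lstar v :=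
  calc |⟪L u, v⟫| = |⟪u, P (Lstar v)⟫| := by rw [hadj, ← hP, hu]
    _ ≤ ‖u‖ * ‖P (Lstar v)‖ := abs_real_inner_le_norm _ _
    _ ≤ ‖u‖ * (c₁ * jumpSN L Lstar v) := by gcongr; exact hPLstar v
    _ = c₁ * ‖u‖ * jumpSN L Lstar v := by ring

lemma abs_inner_pow_succ_apply_le_of_apply_eq_self {c₁ c₂ c₃ : ℝ}
    (hc₁ : 0 ≤ c₁) (hc₂ : 0 ≤ c₂) (hc₃ : 0 ≤ c₃)
    (hadj : ∀ w v, ⟪L w, v⟫ = ⟪w, Lstar v⟫) (hneg : ∀ v, ⟪(L + Lstar) v, v⟫ ≤ 0)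
    (hP : P.IsSymmetric) (hPLstar : ∀ w, ‖P (Lstar w)‖ ≤ c₁ * jumpSN L Lstar w)
    (hjump : ∀ v, jumpSN L Lstar v ≤ c₂ * ‖v‖) (hL : ∀ v, ‖L v‖ ≤ c₃ * ‖v‖)
    {u : V} (hu : P u = u) (n : ℕ) (v : V) :
    |⟪(L ^ (n + 1)) u, v⟫| ≤ (c₁ + c₂ * (1 + c₃) ^ n) * ‖u‖ *
      ∑ j ∈ Finset.range (n + 1), jumpSN L Lstar ((L ^ j) v) := by
  have hpow_u (j : ℕ) (hj : j < n) :
      jumpSN L Lstar ((L ^ (n - (j + 1))) (L u)) ≤ c₂ * (1 + c₃) ^ n * ‖u‖ := by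
    rw [← Module.End.mul_apply, ← pow_succ]
    exact jumpSN_pow_apply_le_mul_norm hc₂ hc₃ hjump hL (by omega) u
  have hJ (j : ℕ) : 0 ≤ jumpSN L Lstar ((L ^ j) v) := jumpSN_nonneg _ _ _
  calc |⟪(L ^ (n + 1)) u, v⟫| = |⟪(L ^ n) (L u), v⟫| := by rw [pow_succ, Module.End.mul_apply]
    _ ≤ ∑ j ∈ Finset.range n,
          jumpSN L Lstar ((L ^ (n - (j + 1))) (L u)) * jumpSN L Lstar ((L ^ j) v) +
          |⟪L u, (L ^ n) v⟫| := abs_inner_pow_apply_le hadj hneg n (L u) v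
    _ ≤ ∑ j ∈ Finset.range n, c₂ * (1 + c₃) ^ n * ‖u‖ * jumpSN L Lstar ((L ^ j) v) +
          c₁ * ‖u‖ * jumpSN L Lstar ((L ^ n) v) := by
        gcongr with j hj
        · exact hJ j
        · exact hpow_u j (Finset.mem_range.mp hj)
        · exact abs_inner_apply_le_of_apply_eq_self hadj hP hPLstar hu _
    _ ≤ (c₁ + c₂ * (1 + c₃) ^ n) * ‖u‖ *
          ∑ j ∈ Finset.range (n + 1), jumpSN L Lstar ((L ^ j) v) := by
        rw [← Finset.mul_sum, Finset.sum_range_succ, mul_add]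
        gcongr
        · exact Finset.sum_nonneg fun j _ => hJ j
        · exact le_add_of_nonneg_left hc₁
        · exact hJ n
        · exact le_add_of_nonneg_right (by positivity)

theorem abs_inner_altComp_cons_append_le {c₁ c₂ c₃ : ℝ}
    (hc₁ : 0 ≤ c₁) (hc₂ : 0 ≤ c₂) (hc₃ : 0 ≤ c₃)
    (hadj : ∀ w v, ⟪L w, v⟫ = ⟪w, Lstar v⟫) (hneg : ∀ v, ⟪(L + Lstar) v, v⟫ ≤ 0)
    (hP : P.IsSymmetricProjection)
    (hPL : ∀ w, ‖P (L w)‖ ≤ c₁ * jumpSN L Lstar w)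
    (hPLstar : ∀ w, ‖P (Lstar w)‖ ≤ c₁ * jumpSN L Lstar w)
    (hjump : ∀ v, jumpSN L Lstar v ≤ c₂ * ‖v‖) (hL : ∀ v, ‖L v‖ ≤ c₃ * ‖v‖)
    (n : ℕ) (l : List ℕ) (m : ℕ) (w v : V) :
    |⟪altComp L P ((n + 1) :: (l ++ [m + 1])) w, v⟫| ≤
      (c₁ + c₂ * (1 + c₃) ^ n) * (c₃ ^ l.sum * (c₁ * jumpSN L Lstar ((L ^ m) w))) *
        ∑ j ∈ Finset.range (n + 1), jumpSN L Lstar ((L ^ j) v) := by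
  set u := P (altComp L P (l ++ [m + 1]) w) with hu
  have hu_norm : ‖u‖ ≤ c₃ ^ l.sum * (c₁ * jumpSN L Lstar ((L ^ m) w)) := by
    refine (norm_apply_altComp_append_singleton_le hc₃
      (norm_apply_le_of_isSymmetricProjection hP) hL l (m + 1) w).trans ?_
    rw [pow_succ' L, Module.End.mul_apply]
    gcongr
    exact hPL _
  have hu_fixed : P u = u := LinearMap.congr_fun hP.isIdempotentElem _
  rw [altComp_cons L P (n + 1) (by simp), Module.End.mul_apply, Module.End.mul_apply, ← hu]
  refine (abs_inner_pow_succ_apply_le_of_apply_eq_self hc₁ hc₂ hc₃ hadj hneg hP.isSymmetric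
    hPLstar hjump hL hu_fixed n v).trans ?_
  gcongr
  exact Finset.sum_nonneg fun j _ => jumpSN_nonneg _ _ _

theorem inner_altComp_bound_general {c₁ c₂ c₃ h : ℝ}
    (hc₁ : 0 ≤ c₁) (hc₂ : 0 ≤ c₂) (hc₃ : 0 ≤ c₃) (hh : 0 < h)
    (hadj : ∀ w v, ⟪L w, v⟫ = ⟪w, Lstar v⟫) (hneg : ∀ v, ⟪(L + Lstar) v, v⟫ ≤ 0)
    (hP : P.IsSymmetricProjection)
    (hPL : ∀ w, ‖P (L w)‖ ≤ c₁ * h ^ (-(1 / 2) : ℝ) * jumpSN L Lstar w)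
    (hPLstar : ∀ w, ‖P (Lstar w)‖ ≤ c₁ * h ^ (-(1 / 2) : ℝ) * jumpSN L Lstar w)
    (hjump : ∀ v, jumpSN L Lstar v ≤ c₂ * h ^ (-(1 / 2) : ℝ) * ‖v‖)
    (hL : ∀ v, ‖L v‖ ≤ c₃ * h⁻¹ * ‖v‖)
    (n : ℕ) (l : List ℕ) (m : ℕ) (w v : V) :
    |⟪altComp L P ((n + 1) :: (l ++ [m + 1])) w, v⟫| ≤
      (c₁ + c₂ * (1 + c₃) ^ n) * c₃ ^ l.sum * c₁ * ∑ j ∈ Finset.range (n + 1),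
        h ^ (-(((n + 1) :: (l ++ [m + 1])).sum : ℝ) + ((m + 1 : ℕ) : ℝ) + (j : ℝ)) *
          jumpSN L Lstar ((L ^ m) w) * jumpSN L Lstar ((L ^ j) v) := by
  have hPL' (x : V) : ‖P ((h • L) x)‖ ≤ c₁ * jumpSN (h • L) (h • Lstar) x := by
    rw [LinearMap.smul_apply, map_smul]
    exact norm_smul_le_mul_jumpSN_smul_smul hh (hPL x)
  have hPLstar' (x : V) : ‖P ((h • Lstar) x)‖ ≤ c₁ * jumpSN (h • L) (h • Lstar) x := by
    rw [LinearMap.smul_apply, map_smul]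
    exact norm_smul_le_mul_jumpSN_smul_smul hh (hPLstar x)
  have hL' (x : V) : ‖(h • L) x‖ ≤ c₃ * ‖x‖ :=
    calc ‖(h • L) x‖ = h * ‖L x‖ := by rw [LinearMap.smul_apply, norm_smul_of_nonneg hh.le]
      _ ≤ h * (c₃ * h⁻¹ * ‖x‖) := by gcongr; exact hL x
      _ = c₃ * ‖x‖ := by field_simp
  have hscaled := abs_inner_altComp_cons_append_le hc₁ hc₂ hc₃
    (inner_smul_apply_eq_inner_smul_adjoint h hadj) (inner_smul_add_smul_nonpos hh.le hneg) hP
    hPL' hPLstar' (fun x => jumpSN_smul_smul_le_mul_norm hh (hjump x)) hL' n l m w v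
  rw [altComp_smul, LinearMap.smul_apply, real_inner_smul_left, abs_mul,
    abs_of_pos (pow_pos hh _)] at hscaled
  simp only [jumpSN_smul_pow_apply hh.le] at hscaled
  set s := ((n + 1) :: (l ++ [m + 1])).sum
  refine le_of_mul_le_mul_left (hscaled.trans_eq ?_) (pow_pos hh s)
  simp only [Finset.mul_sum]
  refine Finset.sum_congr rfl fun j _ => ?_
  have hpow : h ^ s * h ^ (-(s : ℝ) + ((m + 1 : ℕ) : ℝ) + (j : ℝ)) = √h * √h * h ^ m * h ^ j := by
    rw [pow_mul_rpow_neg_add_add hh, Real.mul_self_sqrt hh.le, pow_succ']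
  linear_combination -(c₁ + c₂ * (1 + c₃) ^ n) * c₃ ^ l.sum * c₁ *
    jumpSN L Lstar ((L ^ m) w) * jumpSN L Lstar ((L ^ j) v) * hpow

end JumpSeminorm

/-- Lemma 3.11: for an integer vector `iv = (i₁,…,i_m)` with `m ≥ 2` and positive
entries, `|⟪L^{iv} w, v⟫| ≤ C ∑_{j=0}^{i₁-1} h^{-|iv|+i_m+j} |L^{i_m-1} w|_Γ |L^j v|_Γ`. -/
theorem inner_altComp_bound :
    ∀ c₁ c₂ c₃ : ℝ, 0 < c₁ → 0 < c₂ → 0 < c₃ →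
    ∀ iv : List ℕ, 2 ≤ iv.length → (∀ x ∈ iv, 1 ≤ x) →
    ∃ C > (0 : ℝ),
      ∀ (V : Type) [NormedAddCommGroup V] [InnerProductSpace ℝ V],
      ∀ L Lstar P : V →ₗ[ℝ] V,
        (∀ w v : V, ⟪L w, v⟫ = ⟪w, Lstar v⟫) →
        (∀ v : V, ⟪(L + Lstar) v, v⟫ ≤ 0) →
        (∀ w v : V, ⟪P w, v⟫ = ⟪w, P v⟫) →
        (∀ v : V, P (P v) = P v) →
        ∀ h : ℝ, 0 < h →
        (∀ w : V, ‖P (L w)‖ ≤ c₁ * h ^ (-(1 / 2) : ℝ) * jumpSN L Lstar w) →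
        (∀ w : V, ‖P (Lstar w)‖ ≤ c₁ * h ^ (-(1 / 2) : ℝ) * jumpSN L Lstar w) →
        (∀ v : V, jumpSN L Lstar v ≤ c₂ * h ^ (-(1 / 2) : ℝ) * ‖v‖) →
        (∀ v : V, ‖L v‖ ≤ c₃ * h⁻¹ * ‖v‖) →
        ∀ w v : V,
          |⟪altComp L P iv w, v⟫|
            ≤ C * ∑ j ∈ Finset.range (iv.headD 0),
                h ^ (-(iv.sum : ℝ) + (iv.getLastD 0 : ℝ) + (j : ℝ))
                  * jumpSN L Lstar ((L ^ (iv.getLastD 0 - 1)) w)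
                  * jumpSN L Lstar ((L ^ j) v) := by
  intro c₁ c₂ c₃ hc₁ hc₂ hc₃ iv hlen hpos
  obtain ⟨i, l, k, rfl⟩ := exists_eq_cons_append_singleton hlen
  obtain ⟨n, rfl⟩ := Nat.exists_eq_add_of_le' (hpos i (by simp))
  obtain ⟨m, rfl⟩ := Nat.exists_eq_add_of_le' (hpos k (by simp))
  refine ⟨(c₁ + c₂ * (1 + c₃) ^ n) * c₃ ^ l.sum * c₁, by positivity, ?_⟩
  intro V _ _ L Lstar P hadj hneg hP hPP h hh hPL hPLstar hjump hL w v
  simpa only [List.headD_cons, List.getLastD_cons, List.getLastD_concat, Nat.add_sub_cancel] using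
    inner_altComp_bound_general hc₁.le hc₂.le hc₃.le hh hadj hneg ⟨LinearMap.ext hPP, hP⟩
      hPL hPLstar hjump hL n l m w v
end

section
/- Let r ≥ 1 be an integer with r ≡ 1 (mod 4). There exist constants C > 0 and μ₀ > 0, depending only on r, with the following property: for every finite-dimensional real inner product space V, every semi-negative linear map L : V → V, and every τ > 0 with τ‖L‖ ≤ μ₀, the operator R = Σ_{i=0}^r (1/i!)(τL)^i satisfies ‖R w‖ ≤ (1 + C (τ‖L‖)^{r+1}) ‖w‖ for all w ∈ V. -/
open RealInnerProductSpace

/-!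
Since `A = τL` is semi-negative, `t ↦ ‖exp (tA) w‖²` has the nonpositive derivative
`2⟪A exp (tA) w, exp (tA) w⟫`, so `exp A` is a contraction. The Runge–Kutta operator `R` is the
Taylor polynomial of degree `r` of `exp A`, hence
`‖R‖ ≤ ‖exp A‖ + ‖exp A - R‖ ≤ 1 + O(‖A‖ ^ (r + 1))`.
-/

theorem norm_exp_sub_sum_range_le (𝕂 : Type*) {𝔸 : Type*} [RCLike 𝕂] [NormedRing 𝔸]
    [NormedAlgebra 𝕂 𝔸] [CompleteSpace 𝔸] (x : 𝔸) {n : ℕ} (hn : n ≠ 0) :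
    ‖NormedSpace.exp x - ∑ i ∈ Finset.range n, (1 / (i.factorial : 𝕂)) • x ^ i‖
      ≤ Real.exp ‖x‖ / n.factorial * ‖x‖ ^ n := by
  have hasSum_tail : HasSum (fun i => (1 / ((i + n).factorial : 𝕂)) • x ^ (i + n))
      (NormedSpace.exp x - ∑ i ∈ Finset.range n, (1 / (i.factorial : 𝕂)) • x ^ i) := by
    have hasSum_exp := NormedSpace.exp_series_hasSum_exp' (𝕂 := 𝕂) x
    simp only [← one_div] at hasSum_exp
    exact (hasSum_nat_add_iff' n).2 hasSum_exp
  have hasSum_majorant : HasSum (fun i => ‖x‖ ^ n / n.factorial * (‖x‖ ^ i / i.factorial))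
      (‖x‖ ^ n / n.factorial * Real.exp ‖x‖) := by
    rw [Real.exp_eq_exp_ℝ]
    exact (NormedSpace.expSeries_div_hasSum_exp ‖x‖).mul_left _
  have term_le (i : ℕ) : ‖(1 / ((i + n).factorial : 𝕂)) • x ^ (i + n)‖
      ≤ ‖x‖ ^ n / n.factorial * (‖x‖ ^ i / i.factorial) := by
    have factorial_le : (i.factorial * n.factorial : ℝ) ≤ (i + n).factorial := by
      exact_mod_cast Nat.le_of_dvd (i + n).factorial_pos
        (Nat.factorial_mul_factorial_dvd_factorial_add i n)
    calc ‖(1 / ((i + n).factorial : 𝕂)) • x ^ (i + n)‖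
        = 1 / (i + n).factorial * ‖x ^ (i + n)‖ := by
          rw [norm_smul, norm_div, norm_one, RCLike.norm_natCast]
      _ ≤ 1 / (i.factorial * n.factorial) * ‖x‖ ^ (i + n) := by
          gcongr
          exact norm_pow_le' x (by lia)
      _ = ‖x‖ ^ n / n.factorial * (‖x‖ ^ i / i.factorial) := by
          rw [pow_add]
          ring
  calc ‖NormedSpace.exp x - ∑ i ∈ Finset.range n, (1 / (i.factorial : 𝕂)) • x ^ i‖
      ≤ ‖x‖ ^ n / n.factorial * Real.exp ‖x‖ :=
        hasSum_tail.norm_le_of_bounded hasSum_majorant term_le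
    _ = Real.exp ‖x‖ / n.factorial * ‖x‖ ^ n := by ring

theorem hasDerivAt_exp_smul_apply {𝕂 E : Type*} [RCLike 𝕂] [NormedAddCommGroup E]
    [NormedSpace 𝕂 E] [CompleteSpace E] (A : E →L[𝕂] E) (v : E) (t : 𝕂) :
    HasDerivAt (fun s : 𝕂 => NormedSpace.exp (s • A) v) (A (NormedSpace.exp (t • A) v)) t := by
  simpa using (hasDerivAt_exp_smul_const' A t).clm_apply (hasDerivAt_const t v)

theorem inner_map_self_nonpos_of_add_adjoint {V : Type*} [SeminormedAddCommGroup V]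
    [InnerProductSpace ℝ V] {f g : V → V} (hadj : ∀ w v, ⟪f w, v⟫ = ⟪w, g v⟫)
    (hneg : ∀ v, ⟪f v + g v, v⟫ ≤ 0) (v : V) : ⟪f v, v⟫ ≤ 0 := by
  have two_mul_inner : ⟪f v + g v, v⟫ = 2 * ⟪f v, v⟫ := by
    rw [inner_add_left, real_inner_comm v (g v), ← hadj, two_mul]
  linarith [hneg v]

section SemiNegative

variable {V : Type*} [NormedAddCommGroup V] [InnerProductSpace ℝ V] [CompleteSpace V]
  {A : V →L[ℝ] V}

theorem antitone_norm_exp_smul_apply (hA : ∀ v, ⟪A v, v⟫ ≤ 0) (w : V) :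
    Antitone fun t : ℝ => ‖NormedSpace.exp (t • A) w‖ := by
  have hasDerivAt_norm_sq (t : ℝ) := (hasDerivAt_exp_smul_apply A w t).norm_sq
  have antitone_norm_sq : Antitone fun t : ℝ => ‖NormedSpace.exp (t • A) w‖ ^ 2 := by
    refine antitone_of_deriv_nonpos (fun t => (hasDerivAt_norm_sq t).differentiableAt) fun t => ?_
    rw [(hasDerivAt_norm_sq t).deriv, real_inner_comm]
    linarith [hA (NormedSpace.exp (t • A) w)]
  exact fun s t hst => le_of_sq_le_sq (antitone_norm_sq hst) (norm_nonneg _)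

theorem norm_exp_le_one_of_inner_nonpos (hA : ∀ v, ⟪A v, v⟫ ≤ 0) :
    ‖NormedSpace.exp A‖ ≤ 1 := by
  refine ContinuousLinearMap.opNorm_le_bound _ zero_le_one fun w => ?_
  simpa using antitone_norm_exp_smul_apply hA w zero_le_one

theorem norm_sum_range_smul_pow_le_of_inner_nonpos (hA : ∀ v, ⟪A v, v⟫ ≤ 0) {n : ℕ} (hn : n ≠ 0) :
    ‖∑ i ∈ Finset.range n, (1 / (i.factorial : ℝ)) • A ^ i‖
      ≤ 1 + Real.exp ‖A‖ / n.factorial * ‖A‖ ^ n :=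
  calc ‖∑ i ∈ Finset.range n, (1 / (i.factorial : ℝ)) • A ^ i‖
      ≤ ‖NormedSpace.exp A‖
          + ‖NormedSpace.exp A - ∑ i ∈ Finset.range n, (1 / (i.factorial : ℝ)) • A ^ i‖ :=
        norm_le_norm_add_norm_sub _ _
    _ ≤ 1 + Real.exp ‖A‖ / n.factorial * ‖A‖ ^ n :=
        add_le_add (norm_exp_le_one_of_inner_nonpos hA) (norm_exp_sub_sum_range_le ℝ A hn)

theorem rk_weak_stability_mod_one_general {L : V →L[ℝ] V} (hL : ∀ v, ⟪L v, v⟫ ≤ 0) (r : ℕ)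
    {τ μ : ℝ} (hτ : 0 ≤ τ) (hμ : τ * ‖L‖ ≤ μ) :
    ‖∑ i ∈ Finset.range (r + 1), (1 / (i.factorial : ℝ)) • (τ • L) ^ i‖
      ≤ 1 + Real.exp μ / (r + 1).factorial * (τ * ‖L‖) ^ (r + 1) := by
  have inner_smul_nonpos (v : V) : ⟪(τ • L) v, v⟫ ≤ 0 := by
    rw [smul_apply, real_inner_smul_left]
    exact mul_nonpos_of_nonneg_of_nonpos hτ (hL v)
  have norm_smul_eq : ‖τ • L‖ = τ * ‖L‖ := by rw [norm_smul, Real.norm_of_nonneg hτ]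
  refine (norm_sum_range_smul_pow_le_of_inner_nonpos inner_smul_nonpos r.succ_ne_zero).trans ?_
  rw [norm_smul_eq]
  gcongr

end SemiNegative

/-- Weak(r+1) stability of the r-stage r-th order RK method for `r ≡ 1 (mod 4)`
(Theorem 3.8, case 1): for a semi-negative `L` and `τ‖L‖ ≤ μ₀`, the operator
`R = ∑_{i=0}^r (1/i!)(τL)^i` satisfies `‖R w‖ ≤ (1 + C(τ‖L‖)^{r+1})‖w‖`. -/
theorem rk_weak_stability_mod_one (r : ℕ) (hr : 1 ≤ r) (hmod : r % 4 = 1) :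
    ∃ C > (0 : ℝ), ∃ μ₀ > (0 : ℝ),
      ∀ (V : Type) [NormedAddCommGroup V] [InnerProductSpace ℝ V] [FiniteDimensional ℝ V],
      ∀ L Lstar : V →L[ℝ] V,
        (∀ w v : V, ⟪L w, v⟫ = ⟪w, Lstar v⟫) →
        (∀ v : V, ⟪(L + Lstar) v, v⟫ ≤ 0) →
        ∀ τ : ℝ, 0 < τ → τ * ‖L‖ ≤ μ₀ →
        ∀ w : V,
          ‖(∑ i ∈ Finset.range (r + 1), (1 / (i.factorial : ℝ)) • (τ • L) ^ i) w‖
            ≤ (1 + C * (τ * ‖L‖) ^ (r + 1)) * ‖w‖ := by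
  refine ⟨Real.exp 1 / (r + 1).factorial, by positivity, 1, one_pos,
    fun V _ _ _ L Lstar hadj hneg τ hτ hμ w => ?_⟩
  have : CompleteSpace V := FiniteDimensional.complete ℝ V
  exact ContinuousLinearMap.le_of_opNorm_le _ (rk_weak_stability_mod_one_general
    (inner_map_self_nonpos_of_add_adjoint hadj hneg) r hτ.le hμ) w
end

section
/- Let r ≥ 2 be an integer with r ≡ 2 (mod 4). There exist constants C > 0 and μ₀ > 0, depending only on r, with the following property: for every finite-dimensional real inner product space V, every semi-negative linear map L : V → V, and every τ > 0 with τ‖L‖ ≤ μ₀, the operator R = Σ_{i=0}^r (1/i!)(τL)^i satisfies ‖R w‖ ≤ (1 + C (τ‖L‖)^{r+2}) ‖w‖ for all w ∈ V. -/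
open RealInnerProductSpace

/-!
For even `r` let `T` be the Taylor polynomial of degree `r` of `exp`. Lambert's continued fraction
`tanh (x / 2) = x / (2 + x² / (6 + x² / (10 + ⋯)))`, cut off after `r / 2` partial quotients and
continued by one more partial quotient `b`, is a rational function `N / D` which agrees with
`(T - 1) / (T + 1)` up to order `x ^ r`. The next coefficient is matched by exactly one value of
`b`, and `b` is positive when `r / 2` is odd. All partial quotients being positive,
`⟪N(A) v, D(A) v⟫ ≤ 0` for every dissipative `A`, that is, `‖(D + N)(A) v‖ ≤ ‖(D - N)(A) v‖`. As
`T * (D - N) ≡ D + N` modulo `x ^ (r + 2)`, inverting `D - N` modulo `x ^ (r + 2)` by a polynomial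
turns this into the bound on `T(A)`; no inverse of an operator is needed.
-/

universe u

section OperatorPolynomials

open Polynomial

variable {𝕜 : Type*} [NontriviallyNormedField 𝕜]

/-- The majorant `∑ ‖aᵢ‖ * μ ^ i` of a polynomial `∑ aᵢ * X ^ i`, which bounds `aeval A p` for
operators `A` of norm at most `μ`. -/
noncomputable def normEval (p : 𝕜[X]) (μ : ℝ) : ℝ := p.sum fun i a ↦ ‖a‖ * μ ^ i

section

variable {E : Type*} [SeminormedAddCommGroup E] [NormedSpace 𝕜 E]

lemma norm_clm_pow_apply_le (A : E →L[𝕜] E) (n : ℕ) (v : E) : ‖(A ^ n) v‖ ≤ ‖A‖ ^ n * ‖v‖ := by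
  induction n with
  | zero => simp
  | succ n ih =>
    calc ‖(A ^ (n + 1)) v‖ = ‖A ((A ^ n) v)‖ := by rw [pow_succ']; rfl
      _ ≤ ‖A‖ * (‖A‖ ^ n * ‖v‖) := A.le_opNorm_of_le ih
      _ = ‖A‖ ^ (n + 1) * ‖v‖ := by ring

lemma norm_aeval_apply_le {A : E →L[𝕜] E} {μ : ℝ} (hA : ‖A‖ ≤ μ) (p : 𝕜[X]) (v : E) :
    ‖aeval A p v‖ ≤ normEval p μ * ‖v‖ := by
  rw [aeval_eq_sum_range, sum_apply, normEval,
    p.sum_over_range fun i ↦ by rw [norm_zero, zero_mul], Finset.sum_mul]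
  refine norm_sum_le_of_le _ fun i _ ↦ ?_
  calc ‖(p.coeff i • A ^ i) v‖ = ‖p.coeff i‖ * ‖(A ^ i) v‖ := norm_smul _ _
    _ ≤ ‖p.coeff i‖ * (μ ^ i * ‖v‖) := by
        gcongr
        exact (norm_clm_pow_apply_le A i v).trans (by gcongr)
    _ = ‖p.coeff i‖ * μ ^ i * ‖v‖ := by ring

lemma norm_aeval_X_pow_mul_apply_le {A : E →L[𝕜] E} {μ : ℝ} (hA : ‖A‖ ≤ μ) (n : ℕ) (p : 𝕜[X])
    (v : E) :
    ‖aeval A (X ^ n * p) v‖ ≤ normEval p μ * ‖A‖ ^ n * ‖v‖ := by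
  calc ‖aeval A (X ^ n * p) v‖ = ‖(A ^ n) (aeval A p v)‖ := by
        rw [map_mul, map_pow, aeval_X]; rfl
    _ ≤ ‖A‖ ^ n * ‖aeval A p v‖ := norm_clm_pow_apply_le A n _
    _ ≤ ‖A‖ ^ n * (normEval p μ * ‖v‖) := by
        gcongr
        exact norm_aeval_apply_le hA p v
    _ = _ := by ring

end

lemma exists_norm_aeval_le_of_X_pow_dvd {T M P : 𝕜[X]} {n : ℕ} (hM : M.coeff 0 ≠ 0)
    (h : X ^ n ∣ T * M - P) (μ : ℝ) :
    ∃ C > (0 : ℝ), ∀ (E : Type u) [SeminormedAddCommGroup E] [NormedSpace 𝕜 E] (A : E →L[𝕜] E),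
      ‖A‖ ≤ μ → (∀ v, ‖aeval A P v‖ ≤ ‖aeval A M v‖) →
        ∀ w, ‖aeval A T w‖ ≤ (1 + C * ‖A‖ ^ n) * ‖w‖ := by
  obtain ⟨W, hW⟩ := h
  obtain ⟨p, q, hpq⟩ : IsCoprime (X ^ n) M :=
    (irreducible_X.coprime_iff_not_dvd.2 (X_dvd_iff.not.2 hM)).pow_left
  refine ⟨max 1 (normEval p μ + normEval (T * p + W * q) μ), by positivity,
    fun E _ _ A hA hPM w ↦ ?_⟩
  have hT : T = P * q + X ^ n * (T * p + W * q) := by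
    linear_combination -T * hpq + q * hW
  have hMq : M * q = 1 - X ^ n * p := by linear_combination hpq
  have hPq : ‖aeval A (P * q) w‖ ≤ ‖w‖ + normEval p μ * ‖A‖ ^ n * ‖w‖ :=
    calc ‖aeval A (P * q) w‖ ≤ ‖aeval A (M * q) w‖ := by
          rw [map_mul, map_mul]; exact hPM (aeval A q w)
      _ = ‖w - aeval A (X ^ n * p) w‖ := by rw [hMq, map_sub, map_one]; rfl
      _ ≤ ‖w‖ + ‖aeval A (X ^ n * p) w‖ := norm_sub_le _ _
      _ ≤ _ := by gcongr; exact norm_aeval_X_pow_mul_apply_le hA n p w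
  calc ‖aeval A T w‖ = ‖aeval A (P * q) w + aeval A (X ^ n * (T * p + W * q)) w‖ := by
        conv_lhs => rw [hT, map_add]
        rfl
    _ ≤ (‖w‖ + normEval p μ * ‖A‖ ^ n * ‖w‖) + normEval (T * p + W * q) μ * ‖A‖ ^ n * ‖w‖ :=
        norm_add_le_of_le hPq (norm_aeval_X_pow_mul_apply_le hA n _ w)
    _ = (1 + (normEval p μ + normEval (T * p + W * q) μ) * ‖A‖ ^ n) * ‖w‖ := by ring
    _ ≤ _ := by gcongr; exact le_max_right _ _

end OperatorPolynomials

section OddContinuedFractions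

open Polynomial

section CommSemiring

variable {R : Type*} [CommSemiring R]

/-- Numerator and denominator of the finite continued fraction
`X / (b₀ + X² / (b₁ + X² / (b₂ + ⋯)))` with partial quotients `b₀, b₁, b₂, …`. Prepending `b` to
the list turns the value `N / D` into `X / (b + X * (N / D))`; the empty fraction is `0 / 1`. -/
noncomputable def oddContFrac : List R → R[X] × R[X]
  | [] => (0, 1)
  | b :: l => (X * (oddContFrac l).2, C b * (oddContFrac l).2 + X * (oddContFrac l).1)

lemma coeff_zero_oddContFrac_fst (l : List R) : (oddContFrac l).1.coeff 0 = 0 := by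
  cases l <;> simp [oddContFrac]

lemma coeff_zero_oddContFrac_snd (l : List R) : (oddContFrac l).2.coeff 0 = l.prod := by
  induction l with
  | nil => simp [oddContFrac]
  | cons b l ih => simp [oddContFrac, mul_coeff_zero, ih]

end CommSemiring

section CommRing

variable {R : Type*} [CommRing R]

lemma coeff_zero_oddContFrac_snd_sub_fst (l : List R) :
    ((oddContFrac l).2 - (oddContFrac l).1).coeff 0 = l.prod := by
  rw [coeff_sub, coeff_zero_oddContFrac_fst, coeff_zero_oddContFrac_snd, sub_zero]

lemma oddContFrac_cons_error {f g h : PowerSeries R} {b : R}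
    (hf : f = PowerSeries.C b * g + PowerSeries.X ^ 2 * h) (l : List R) :
    ((oddContFrac (b :: l)).1 : PowerSeries R) * f
        - ((oddContFrac (b :: l)).2 : PowerSeries R) * (PowerSeries.X * g) =
      -PowerSeries.X ^ 2 * (((oddContFrac l).1 : PowerSeries R) * g
        - ((oddContFrac l).2 : PowerSeries R) * (PowerSeries.X * h)) := by
  simp only [oddContFrac, Polynomial.coe_add, Polynomial.coe_mul, Polynomial.coe_C,
    Polynomial.coe_X, hf]
  ring

lemma oddContFrac_append_error {q : ℕ → R} {g : ℕ → PowerSeries R}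
    (hg : ∀ j, g j = PowerSeries.C (q j) * g (j + 1) + PowerSeries.X ^ 2 * g (j + 2)) (m : ℕ)
    (l : List R) :
    ((oddContFrac ((List.range m).map q ++ l)).1 : PowerSeries R) * g 0
        - ((oddContFrac ((List.range m).map q ++ l)).2 : PowerSeries R) * (PowerSeries.X * g 1) =
      (-PowerSeries.X ^ 2) ^ m
        * (((oddContFrac l).1 : PowerSeries R) * g m
          - ((oddContFrac l).2 : PowerSeries R) * (PowerSeries.X * g (m + 1))) := by
  induction m generalizing l with
  | zero => simp
  | succ m ih =>
    rw [List.range_succ, List.map_append, List.append_assoc, List.map_singleton,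
      List.singleton_append, ih, oddContFrac_cons_error (hg m), pow_succ _ m, mul_assoc]

end CommRing

section Dissipative

variable {V : Type*} [SeminormedAddCommGroup V] [InnerProductSpace ℝ V]

lemma inner_aeval_oddContFrac_nonpos {A : V →L[ℝ] V} (hA : ∀ v, ⟪A v, v⟫ ≤ 0) {l : List ℝ}
    (hl : ∀ b ∈ l, 0 ≤ b) (v : V) :
    ⟪aeval A (oddContFrac l).1 v, aeval A (oddContFrac l).2 v⟫ ≤ 0 := by
  induction l generalizing v with
  | nil => simp [oddContFrac]
  | cons b l ih =>
    rw [List.forall_mem_cons] at hl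
    set N := (oddContFrac l).1
    set D := (oddContFrac l).2
    have hXD : aeval A (X * D) v = A (aeval A D v) := by simp
    have hXD' : aeval A (X * D) v = aeval A D (A v) := by simp [mul_comm X]
    have hXN : aeval A (X * N) v = aeval A N (A v) := by simp [mul_comm X]
    calc ⟪aeval A (X * D) v, aeval A (C b * D + X * N) v⟫
        = ⟪aeval A (X * D) v, b • aeval A D v + aeval A (X * N) v⟫ := by
          rw [← smul_eq_C_mul, map_add, map_smul]; rfl
      _ = b * ⟪A (aeval A D v), aeval A D v⟫ + ⟪aeval A N (A v), aeval A D (A v)⟫ := by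
          rw [inner_add_right, inner_smul_right, hXN, real_inner_comm (aeval A N (A v)), ← hXD',
            ← hXD]
      _ ≤ 0 := add_nonpos (mul_nonpos_of_nonneg_of_nonpos hl.1 (hA _)) (ih hl.2 (A v))

lemma norm_add_le_norm_sub_of_inner_nonpos {x y : V} (h : ⟪x, y⟫ ≤ 0) : ‖y + x‖ ≤ ‖y - x‖ := by
  refine le_of_sq_le_sq ?_ (norm_nonneg _)
  rw [norm_add_sq_real, norm_sub_sq_real, real_inner_comm]
  linarith

lemma norm_aeval_oddContFrac_add_le_sub {A : V →L[ℝ] V} (hA : ∀ v, ⟪A v, v⟫ ≤ 0) {l : List ℝ}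
    (hl : ∀ b ∈ l, 0 ≤ b) (v : V) :
    ‖aeval A ((oddContFrac l).2 + (oddContFrac l).1) v‖ ≤
      ‖aeval A ((oddContFrac l).2 - (oddContFrac l).1) v‖ := by
  rw [map_add, map_sub]
  exact norm_add_le_norm_sub_of_inner_nonpos (inner_aeval_oddContFrac_nonpos hA hl v)

end Dissipative

end OddContinuedFractions

section LambertContinuedFraction

open PowerSeries

lemma X_pow_succ_dvd_trunc_mul_sub {R : Type*} [CommRing R] {f g : R⟦X⟧} {M P : Polynomial R}
    {n : ℕ} (h : f * (M : R⟦X⟧) - (P : R⟦X⟧) = X ^ n * g)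
    (hg : constantCoeff g = coeff n f * M.coeff 0) :
    Polynomial.X ^ (n + 1) ∣ trunc n f * M - P := by
  set t : R⟦X⟧ := mk fun i ↦ coeff (i + n) f
  have htrunc : f = X ^ n * t + (trunc n f : R⟦X⟧) := eq_X_pow_mul_shift_add_trunc n f
  have hcoe : ((trunc n f * M - P : Polynomial R) : R⟦X⟧) = X ^ n * (g - t * (M : R⟦X⟧)) := by
    rw [Polynomial.coe_sub, Polynomial.coe_mul]
    linear_combination h - (M : R⟦X⟧) * htrunc
  have hzero : constantCoeff (g - t * (M : R⟦X⟧)) = 0 := by simp [t, hg]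
  have hdvd : (X : R⟦X⟧) ^ (n + 1) ∣ ((trunc n f * M - P : Polynomial R) : R⟦X⟧) := by
    rw [hcoe, pow_succ]
    exact mul_dvd_mul_left _ (X_dvd_iff.2 hzero)
  simpa only [X_pow_dvd_iff, Polynomial.X_pow_dvd_iff, Polynomial.coeff_coe] using hdvd

/-- The power series `g₀ = exp + 1`, `g₁ = (exp - 1) / X`, `g₂`, … generated by Lambert's continued
fraction for `tanh (X / 2) = X * g₁ / g₀`: the tail of that fraction from the `j`-th partial
quotient on is `X * gⱼ₊₁ / gⱼ`. -/
noncomputable def lambertSeries : ℕ → ℝ⟦X⟧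
  | 0 => exp ℝ + 1
  | j + 1 => mk fun n ↦ ((j + n).factorial : ℝ) / (n.factorial * (2 * j + n + 1).factorial)

lemma X_mul_lambertSeries_one : X * lambertSeries 1 = exp ℝ - 1 := by
  ext (_ | n)
  · simp
  · simp only [lambertSeries, zero_add, mul_zero, coeff_succ_X_mul, coeff_mk, map_sub, coeff_exp,
      one_div, map_inv₀, map_natCast, coeff_one, Nat.add_eq_zero_iff, one_ne_zero, and_false,
      ↓reduceIte, sub_zero]
    field_simp

lemma coeff_X_sq_mul_lambertSeries (j n : ℕ) :
    coeff (R := ℝ) n (X ^ 2 * lambertSeries (j + 2)) =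
      n * (n - 1) * (j + n - 1).factorial / (n.factorial * (2 * j + n + 1).factorial) := by
  rcases n with _ | _ | n
  · simp [coeff_X_pow_mul']
  · simp [coeff_X_pow_mul']
  · rw [add_assoc n 1 1, one_add_one_eq_two, coeff_X_pow_mul]
    simp only [lambertSeries, coeff_mk]
    rw [show j + 1 + n = j + (n + 2) - 1 by lia,
      show 2 * (j + 1) + n + 1 = 2 * j + (n + 2) + 1 by lia,
      show (n + 2).factorial = (n + 2) * ((n + 1) * n.factorial) from rfl]
    push_cast
    field_simp
    ring

lemma lambertSeries_eq (j : ℕ) :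
    lambertSeries j =
      C (4 * j + 2 : ℝ) * lambertSeries (j + 1) + X ^ 2 * lambertSeries (j + 2) := by
  ext n
  rw [map_add, coeff_C_mul, coeff_X_sq_mul_lambertSeries]
  rcases j with _ | j
  · rcases n with _ | n
    · norm_num [lambertSeries]
    · simp only [lambertSeries, map_add, coeff_exp, Nat.factorial_succ, Nat.cast_mul, Nat.cast_add,
        Nat.cast_one, one_div, mul_inv_rev, eq_ratCast, Rat.cast_mul, Rat.cast_inv,
        Rat.cast_natCast, Rat.cast_add, Rat.cast_one, coeff_one, Nat.add_eq_zero_iff, one_ne_zero,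
        and_false, ↓reduceIte, add_zero, CharP.cast_eq_zero, mul_zero, zero_add, coeff_mk,
        add_sub_cancel_right, add_tsub_cancel_right]
      field_simp
      ring
  · simp only [lambertSeries, coeff_mk]
    rw [show j + 1 + n - 1 = j + n by lia, show j + 1 + n = j + n + 1 by lia,
      show 2 * (j + 1) + n + 1 = 2 * j + n + 1 + 1 + 1 by lia]
    simp only [Nat.factorial_succ, Nat.cast_mul, Nat.cast_add, Nat.cast_one, Nat.cast_ofNat]
    field_simp
    ring

lemma constantCoeff_lambertSeries_pos (j : ℕ) : 0 < constantCoeff (lambertSeries j) := by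
  rcases j with _ | j
  · simp [lambertSeries]
  · rw [← coeff_zero_eq_constantCoeff_apply]
    simp only [lambertSeries, coeff_mk]
    positivity

/-- The partial quotients of Lambert's continued fraction
`tanh (x / 2) = x / (2 + x² / (6 + x² / (10 + ⋯)))`, cut off after the first `m` and followed by
`b`. -/
def lambertQuotients (m : ℕ) (b : ℝ) : List ℝ :=
  (List.range m).map (fun j : ℕ ↦ (4 * j + 2 : ℝ)) ++ [b]

lemma lambertQuotients_pos (m : ℕ) {b : ℝ} (hb : 0 < b) : ∀ a ∈ lambertQuotients m b, 0 < a := by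
  simp only [lambertQuotients, List.mem_append, List.mem_map, List.mem_singleton]
  rintro a (⟨j, -, rfl⟩ | rfl)
  · positivity
  · exact hb

lemma prod_lambertQuotients (m : ℕ) (b : ℝ) :
    (lambertQuotients m b).prod = b * (lambertQuotients m 1).prod := by
  simp [lambertQuotients, mul_comm]

lemma exp_mul_sub_oddContFrac_lambertQuotients (m : ℕ) (b : ℝ) :
    exp ℝ * (((oddContFrac (lambertQuotients m b)).2 - (oddContFrac (lambertQuotients m b)).1 :
        Polynomial ℝ) : ℝ⟦X⟧)
      - (((oddContFrac (lambertQuotients m b)).2 + (oddContFrac (lambertQuotients m b)).1 :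
        Polynomial ℝ) : ℝ⟦X⟧) =
      X ^ (2 * m + 1) * ((-1) ^ m * (C b * lambertSeries (m + 1) - lambertSeries m)) := by
  have herror := oddContFrac_append_error lambertSeries_eq m [b]
  have hzero : lambertSeries 0 = exp ℝ + 1 := rfl
  rw [hzero, X_mul_lambertSeries_one, neg_pow, ← pow_mul] at herror
  simp only [oddContFrac, mul_one, mul_zero, add_zero, Polynomial.coe_X, Polynomial.coe_C]
    at herror
  rw [lambertQuotients, Polynomial.coe_sub, Polynomial.coe_add]
  linear_combination -herror

lemma exists_pos_X_pow_dvd_trunc_exp_mul_sub {m : ℕ} (hm : Odd m) :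
    ∃ b > (0 : ℝ), Polynomial.X ^ (2 * m + 2) ∣
      trunc (2 * m + 1) (exp ℝ)
          * ((oddContFrac (lambertQuotients m b)).2 - (oddContFrac (lambertQuotients m b)).1)
        - ((oddContFrac (lambertQuotients m b)).2 + (oddContFrac (lambertQuotients m b)).1) := by
  set c : ℝ := (lambertQuotients m 1).prod
  set h : ℝ := 1 / (2 * m + 1).factorial
  set γ : ℕ → ℝ := fun j ↦ constantCoeff (lambertSeries j)
  have hγ : ∀ j, 0 < γ j := constantCoeff_lambertSeries_pos
  have hc : 0 < c := List.prod_pos (lambertQuotients_pos m one_pos)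
  have hden : 0 < γ (m + 1) + h * c := by have := hγ (m + 1); positivity
  refine ⟨γ m / (γ (m + 1) + h * c), div_pos (hγ m) hden,
    X_pow_succ_dvd_trunc_mul_sub (exp_mul_sub_oddContFrac_lambertQuotients m _) ?_⟩
  have hcoeff : coeff (2 * m + 1) (exp ℝ) = h := by simp [coeff_exp, h]
  set b := γ m / (γ (m + 1) + h * c) with hb
  have hbalance : γ m - b * γ (m + 1) = h * (b * c) := by
    rw [hb]; field_simp; ring
  rw [hcoeff, coeff_zero_oddContFrac_snd_sub_fst, prod_lambertQuotients, ← hbalance]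
  simp [hm.neg_one_pow, γ]

lemma aeval_trunc_exp {B : Type*} [Ring B] [Algebra ℝ B] (n : ℕ) (a : B) :
    Polynomial.aeval a (trunc n (exp ℝ)) =
      ∑ i ∈ Finset.range n, (1 / (i.factorial : ℝ)) • a ^ i := by
  rw [Polynomial.aeval_def, eval₂_trunc_eq_sum_range]
  simp [coeff_exp, Algebra.smul_def]

end LambertContinuedFraction

lemma inner_apply_self_nonpos_of_add_adjoint {V : Type*} [SeminormedAddCommGroup V]
    [InnerProductSpace ℝ V] {L Lstar : V →L[ℝ] V} (hadj : ∀ w v : V, ⟪L w, v⟫ = ⟪w, Lstar v⟫)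
    (hneg : ∀ v : V, ⟪(L + Lstar) v, v⟫ ≤ 0) (v : V) : ⟪L v, v⟫ ≤ 0 := by
  have h := hneg v
  rw [add_apply, inner_add_left, real_inner_comm v (Lstar v), ← hadj] at h
  linarith

theorem rk_weak_stability_mod_two_general (r : ℕ) (hmod : r % 4 = 2) (μ₀ : ℝ) :
    ∃ C > (0 : ℝ), ∀ (V : Type u) [SeminormedAddCommGroup V] [InnerProductSpace ℝ V]
      (L : V →L[ℝ] V), (∀ v, ⟪L v, v⟫ ≤ 0) → ∀ τ : ℝ, 0 ≤ τ → τ * ‖L‖ ≤ μ₀ → ∀ w : V,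
        ‖(∑ i ∈ Finset.range (r + 1), (1 / (i.factorial : ℝ)) • (τ • L) ^ i) w‖
          ≤ (1 + C * (τ * ‖L‖) ^ (r + 2)) * ‖w‖ := by
  obtain ⟨m, hm, rfl⟩ : ∃ m, Odd m ∧ r = 2 * m := ⟨r / 2, Nat.odd_iff.2 (by lia), by lia⟩
  obtain ⟨b, hb, hdvd⟩ := exists_pos_X_pow_dvd_trunc_exp_mul_sub hm
  have hpos := lambertQuotients_pos m hb
  have hcoeff : ((oddContFrac (lambertQuotients m b)).2
      - (oddContFrac (lambertQuotients m b)).1).coeff 0 ≠ 0 := by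
    rw [coeff_zero_oddContFrac_snd_sub_fst]
    exact (List.prod_pos hpos).ne'
  obtain ⟨C, hC, hbound⟩ := exists_norm_aeval_le_of_X_pow_dvd hcoeff hdvd μ₀
  refine ⟨C, hC, fun V _ _ L hL τ hτ hμ w ↦ ?_⟩
  have hnorm : ‖τ • L‖ = τ * ‖L‖ := by rw [norm_smul, Real.norm_of_nonneg hτ]
  have hdiss (v : V) : ⟪(τ • L) v, v⟫ ≤ 0 := by
    rw [smul_apply, real_inner_smul_left]
    exact mul_nonpos_of_nonneg_of_nonpos hτ (hL v)
  rw [← aeval_trunc_exp, ← hnorm]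
  exact hbound V (τ • L) (hnorm.trans_le hμ)
    (norm_aeval_oddContFrac_add_le_sub hdiss fun a ha ↦ (hpos a ha).le) w

/-- Weak(r+2) stability of the r-stage r-th order RK method for `r ≡ 2 (mod 4)`
(Theorem 3.8, case 2): for a semi-negative `L` and `τ‖L‖ ≤ μ₀`, the operator
`R = ∑_{i=0}^r (1/i!)(τL)^i` satisfies `‖R w‖ ≤ (1 + C(τ‖L‖)^{r+2})‖w‖`. -/
theorem rk_weak_stability_mod_two (r : ℕ) (hr : 2 ≤ r) (hmod : r % 4 = 2) :
    ∃ C > (0 : ℝ), ∃ μ₀ > (0 : ℝ),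
      ∀ (V : Type) [NormedAddCommGroup V] [InnerProductSpace ℝ V] [FiniteDimensional ℝ V],
      ∀ L Lstar : V →L[ℝ] V,
        (∀ w v : V, ⟪L w, v⟫ = ⟪w, Lstar v⟫) →
        (∀ v : V, ⟪(L + Lstar) v, v⟫ ≤ 0) →
        ∀ τ : ℝ, 0 < τ → τ * ‖L‖ ≤ μ₀ →
        ∀ w : V,
          ‖(∑ i ∈ Finset.range (r + 1), (1 / (i.factorial : ℝ)) • (τ • L) ^ i) w‖
            ≤ (1 + C * (τ * ‖L‖) ^ (r + 2)) * ‖w‖ := by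
  obtain ⟨C, hC, h⟩ := rk_weak_stability_mod_two_general r hmod 1
  exact ⟨C, hC, 1, one_pos, fun V _ _ _ L Lstar hadj hneg τ hτ ↦
    h V L (inner_apply_self_nonpos_of_add_adjoint hadj hneg) τ hτ.le⟩
end
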